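/- arXiv:1307.2893 — 3 statements merged into one kernel-verified Lean document; each statement's English description precedes it below -/
import Mathlib

section
/- In a nonlinear model (p_k ≠ k/m for some 0 ≤ k ≤ m) with X_0 > 0 and Y_0 > 0, if z ∈ Z_P ∩ (0,1) is a touchpoint, i.e., there exists ε > 0 such that P is either strictly positive on (z−ε, z) ∪ (z, z+ε) or strictly negative on (z−ε, z) ∪ (z, z+ε), then P(lim_{n→∞} a_n = z) > 0. -/
open MeasureTheory ProbabilityTheory Filter Set

noncomputable section

/-- The polynomial `P(z) = (1/2) ∑_{k=0}^m C(m,k) z^k (1-z)^{m-k} (p_k - k/m)`. -/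
def polyP (m : ℕ) (p : ℕ → ℝ) (z : ℝ) : ℝ :=
  (1 / 2) * ∑ k ∈ Finset.range (m + 1),
    (m.choose k : ℝ) * z ^ k * (1 - z) ^ (m - k) * (p k - (k : ℝ) / m)

/-- The zero set `Z_P = {z ∈ [0,1] : P(z) = 0}`. -/
def zeroSetP (m : ℕ) (p : ℕ → ℝ) : Set ℝ :=
  {z ∈ Set.Icc (0 : ℝ) 1 | polyP m p z = 0}

/-- The two-type preferential attachment process with `m` edges per new node and type
adoption parameters `p 0, …, p m`, defined on a probability space `(Ω, μ)` with filtration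
`F`.  `A n` is the number of red nodes and `X n` the sum of the degrees of red nodes at time
`n`; the transition probabilities given `F n` are those of the model: a number `k` of red
neighbours is drawn from the `Binomial(m, x_n)` distribution, and then the new node is red
with probability `p k` (adding `1` to the red nodes and `k + m` to the red degrees) and blue
with probability `1 - p k` (adding `k` to the red degrees). -/
structure PAProcess (Ω : Type) [MeasurableSpace Ω] where
  μ : Measure Ω
  isProb : IsProbabilityMeasure μ
  m : ℕ
  hm : 1 ≤ m
  p : ℕ → ℝ
  hp : ∀ k ≤ m, p k ∈ Set.Icc (0 : ℝ) 1
  A : ℕ → Ω → ℕ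
  X : ℕ → Ω → ℕ
  F : Filtration ℕ ‹MeasurableSpace Ω›
  A0 : ℕ
  B0 : ℕ
  X0 : ℕ
  Y0 : ℕ
  hA0 : ∀ ω, A 0 ω = A0
  hX0 : ∀ ω, X 0 ω = X0
  adaptedA : ∀ n, Measurable[F n] (A n)
  adaptedX : ∀ n, Measurable[F n] (X n)
  hXle : ∀ n ω, X n ω ≤ X0 + Y0 + 2 * m * n
  step_red : ∀ n, ∀ k ≤ m,
    μ[Set.indicator {ω | A (n + 1) ω = A n ω + 1 ∧ X (n + 1) ω = X n ω + k + m}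
        (fun _ => (1 : ℝ)) | F n]
      =ᵐ[μ] fun ω => (m.choose k : ℝ) *
        ((X n ω : ℝ) / ((X0 : ℝ) + Y0 + 2 * m * n)) ^ k *
        (1 - (X n ω : ℝ) / ((X0 : ℝ) + Y0 + 2 * m * n)) ^ (m - k) * p k
  step_blue : ∀ n, ∀ k ≤ m,
    μ[Set.indicator {ω | A (n + 1) ω = A n ω ∧ X (n + 1) ω = X n ω + k}
        (fun _ => (1 : ℝ)) | F n]
      =ᵐ[μ] fun ω => (m.choose k : ℝ) *
        ((X n ω : ℝ) / ((X0 : ℝ) + Y0 + 2 * m * n)) ^ k *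
        (1 - (X n ω : ℝ) / ((X0 : ℝ) + Y0 + 2 * m * n)) ^ (m - k) * (1 - p k)

namespace PAProcess

variable {Ω : Type} [MeasurableSpace Ω] (P : PAProcess Ω)

/-- Total degree `S_n = S_0 + 2mn`. -/
def S (n : ℕ) : ℕ := P.X0 + P.Y0 + 2 * P.m * n

/-- Normalized red degree `x_n = X_n / S_n`. -/
def x (n : ℕ) (ω : Ω) : ℝ := (P.X n ω : ℝ) / (P.S n : ℝ)

/-- Normalized red node count `a_n = A_n / (A_0 + B_0 + n)`. -/
def a (n : ℕ) (ω : Ω) : ℝ := (P.A n ω : ℝ) / ((P.A0 : ℝ) + P.B0 + n)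

/-- The polynomial `P` of the process. -/
def poly : ℝ → ℝ := polyP P.m P.p

/-- The zero set `Z_P` of the process. -/
def Zp : Set ℝ := zeroSetP P.m P.p

end PAProcess

/-!
The proportion `x n` of red degrees satisfies the Robbins–Monro recursion
`x (n + 1) = x n + (P (x n) + ξ n) / (n + c)`, with bounded martingale differences `ξ n`.

Suppose `P > 0` on both sides of `z`. Then `P' z = 0`, so that `P y ≤ κ (z - y)` for `y < z` close
to `z`, with some `κ < 1 / 2`. Start the recursion at a late time in the middle of a short interval
`[a, z)`. The drift only pushes the path to the right, and too weakly to cross `z`: apart from the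
noise, the weighted distance `(n + c) ^ κ * (z - x n)` does not decrease, and the weighted noise has
increments of order `n ^ (κ - 1)`, which are square summable because `κ < 1 / 2`. By Doob's maximal
inequality both the noise and the weighted noise stay small with positive probability, and then the
path is confined to `[a, z)`. A confined path converges, and since `∑ 1 / (n + c)` diverges it can
only converge to the zero `z` of `P`. The case `P < 0` follows by reflection.

The process does start there with positive probability: the mean degree increment at `z` is `2mz`,
and the possible increments lie on both sides of it, for otherwise `P y = z - y` for all `y`; hence
`X n / S n` can be steered towards any `t` near `z`. Finally, `x n → z` entails `a n → z` by the
strong law for martingale differences.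
-/

section Recursion

variable {x ξ s w : ℕ → ℝ} {g : ℝ → ℝ} {a z κ : ℝ}

theorem recursion_eq_sum (hrec : ∀ n, x (n + 1) = x n + (g (x n) + ξ n) / s n) (n : ℕ) :
    x n = x 0 + ∑ j ∈ Finset.range n, g (x j) / s j + ∑ j ∈ Finset.range n, ξ j / s j := by
  induction n with
  | zero => simp
  | succ n ih =>
    rw [Finset.sum_range_succ, Finset.sum_range_succ, hrec, add_div]
    linarith

theorem weighted_dist_sub_le_succ {y d : ℝ} {n : ℕ} (hs : 0 < s n) (hw : 0 < w (n + 1))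
    (hws : w n ≤ w (n + 1) * (1 - κ / s n)) (hy : y ≤ z) (hd : d ≤ κ * (z - y)) (e : ℝ) :
    w n * (z - y) - w (n + 1) / s n * e ≤ w (n + 1) * (z - (y + (d + e) / s n)) := by
  have hdrift : w (n + 1) * (d / s n) ≤ w (n + 1) * (κ * (z - y) / s n) := by gcongr
  have hweight : w n * (z - y) ≤ w (n + 1) * (1 - κ / s n) * (z - y) :=
    mul_le_mul_of_nonneg_right hws (sub_nonneg.2 hy)
  calc w n * (z - y) - w (n + 1) / s n * e
      ≤ w (n + 1) * (1 - κ / s n) * (z - y) - w (n + 1) / s n * e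
          + (w (n + 1) * (κ * (z - y) / s n) - w (n + 1) * (d / s n)) := by linarith
    _ = w (n + 1) * (z - (y + (d + e) / s n)) := by ring

/-- The first noise bound prevents an exit at `a`; the drift is too weak to cross `z`, and the
second noise bound, on the distance to `z` rescaled by `w`, prevents the noise from doing so. -/
theorem mem_Ico_of_noise_small (hrec : ∀ n, x (n + 1) = x n + (g (x n) + ξ n) / s n)
    (hs : ∀ n, 0 < s n) (hw : ∀ n, 0 < w n) (hws : ∀ n, w n ≤ w (n + 1) * (1 - κ / s n))
    (hg : ∀ y ∈ Ico a z, 0 ≤ g y ∧ g y ≤ κ * (z - y))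
    (hlow : ∀ n, a ≤ x 0 + ∑ j ∈ Finset.range n, ξ j / s j)
    (hup : ∀ n, ∑ j ∈ Finset.range n, w (j + 1) / s j * ξ j < w 0 * (z - x 0)) (n : ℕ) :
    x n ∈ Ico a z := by
  suffices h : x 0 + ∑ j ∈ Finset.range n, ξ j / s j ≤ x n ∧
      w 0 * (z - x 0) - ∑ j ∈ Finset.range n, w (j + 1) / s j * ξ j ≤ w n * (z - x n) from
    ⟨(hlow n).trans h.1, sub_pos.1 (pos_of_mul_pos_right ((sub_pos.2 (hup n)).trans_le h.2)
      (hw n).le)⟩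
  induction n with
  | zero => simp
  | succ n ih =>
    have hlt : x n < z := sub_pos.1 (pos_of_mul_pos_right ((sub_pos.2 (hup n)).trans_le ih.2)
      (hw n).le)
    have hgn := hg (x n) ⟨(hlow n).trans ih.1, hlt⟩
    have hdist := weighted_dist_sub_le_succ (hs n) (hw (n + 1)) (hws n) hlt.le hgn.2 (ξ n)
    have hdrift : 0 ≤ g (x n) / s n := div_nonneg hgn.1 (hs n).le
    rw [Finset.sum_range_succ, Finset.sum_range_succ, hrec]
    exact ⟨by rw [add_div]; linarith [ih.1], by linarith [ih.2]⟩

theorem summable_drift (hrec : ∀ n, x (n + 1) = x n + (g (x n) + ξ n) / s n)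
    (hs : ∀ n, 0 < s n) (hg : ∀ n, 0 ≤ g (x n)) (hx : BddAbove (range x))
    (hnoise : ∃ l, Tendsto (fun n => ∑ j ∈ Finset.range n, ξ j / s j) atTop (nhds l)) :
    Summable fun n => g (x n) / s n := by
  obtain ⟨l, hl⟩ := hnoise
  obtain ⟨b, hb⟩ := hl.bddBelow_range
  obtain ⟨u, hu⟩ := hx
  refine summable_of_sum_range_le (c := u - x 0 - b) (fun n => div_nonneg (hg n) (hs n).le)
    fun n => ?_
  linarith [recursion_eq_sum hrec n, hu ⟨n, rfl⟩, hb ⟨n, rfl⟩]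

theorem not_summable_div_of_tendsto_pos {f : ℕ → ℝ} {l : ℝ} (hs : ∀ n, 0 < s n)
    (hsum : ¬ Summable fun n => 1 / s n) (hl : 0 < l) (hf : Tendsto f atTop (nhds l)) :
    ¬ Summable fun n => f n / s n := by
  refine fun h => hsum ((h.mul_left (2 / l)).of_norm_bounded_eventually_nat ?_)
  filter_upwards [hf.eventually_const_lt (half_lt_self hl)] with n hn
  rw [Real.norm_of_nonneg (one_div_pos.2 (hs n)).le, ← mul_div_assoc]
  gcongr
  · exact (hs n).le
  · rw [div_mul_eq_mul_div, le_div_iff₀ hl]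
    linarith

theorem tendsto_of_mem_Ico (hrec : ∀ n, x (n + 1) = x n + (g (x n) + ξ n) / s n)
    (hs : ∀ n, 0 < s n) (hsum : ¬ Summable fun n => 1 / s n)
    (hgpos : ∀ y ∈ Ico a z, 0 < g y) (hgcont : ContinuousOn g (Ico a z))
    (hnoise : ∃ l, Tendsto (fun n => ∑ j ∈ Finset.range n, ξ j / s j) atTop (nhds l))
    (hx : ∀ n, x n ∈ Ico a z) : Tendsto x atTop (nhds z) := by
  have hdrift : Summable fun n => g (x n) / s n :=
    summable_drift hrec hs (fun n => (hgpos _ (hx n)).le)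
      ⟨z, forall_mem_range.2 fun n => (hx n).2.le⟩ hnoise
  obtain ⟨q, hq⟩ : ∃ q, Tendsto x atTop (nhds q) := by
    obtain ⟨l, hl⟩ := hnoise
    exact ⟨_, ((tendsto_const_nhds.add hdrift.hasSum.tendsto_sum_nat).add hl).congr fun n =>
      (recursion_eq_sum hrec n).symm⟩
  have hqa : a ≤ q := ge_of_tendsto' hq fun n => (hx n).1
  obtain rfl | hqz := (le_of_tendsto' hq fun n => (hx n).2.le).eq_or_lt
  · exact hq
  have hgq : Tendsto (fun n => g (x n)) atTop (nhds (g q)) :=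
    (hgcont q ⟨hqa, hqz⟩).tendsto.comp (tendsto_nhdsWithin_iff.2 ⟨hq, .of_forall hx⟩)
  exact absurd hdrift (not_summable_div_of_tendsto_pos hs hsum (hgpos q ⟨hqa, hqz⟩) hgq)

end Recursion

section PowerWeights

variable {κ c : ℝ}

theorem rpow_sub_one_le_rpow_mul (hκ0 : 0 ≤ κ) (hκ1 : κ ≤ 1) {s : ℝ} (hs : 1 ≤ s) :
    (s - 1) ^ κ ≤ s ^ κ * (1 - κ / s) := by
  have hs0 : 0 < s := zero_lt_one.trans_le hs
  have hinv : -1 ≤ -(1 / s) := neg_le_neg ((div_le_one hs0).2 hs)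
  calc (s - 1) ^ κ = (s * (1 + -(1 / s))) ^ κ := by congr 1; field_simp; ring
    _ = s ^ κ * (1 + -(1 / s)) ^ κ := Real.mul_rpow hs0.le (by linarith)
    _ ≤ s ^ κ * (1 + κ * -(1 / s)) := by
      gcongr
      exact rpow_one_add_le_one_add_mul_self hinv hκ0 hκ1
    _ = s ^ κ * (1 - κ / s) := by ring

theorem not_summable_one_div_nat_add (c : ℝ) : ¬ Summable fun n : ℕ => 1 / ((n : ℝ) + c) := by
  intro h
  have := (Real.summable_one_div_nat_add_rpow c 1).1 (by simpa [abs_div] using h.abs)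
  exact lt_irrefl _ this

theorem summable_sq_rpow_nat_add (hκ : κ < 1 / 2) (hc : 0 < c) :
    Summable fun n : ℕ => (((n : ℝ) + c) ^ (κ - 1)) ^ 2 := by
  refine ((Real.summable_one_div_nat_add_rpow c (2 - 2 * κ)).2 (by linarith)).congr fun n => ?_
  have hpos : 0 < (n : ℝ) + c := by positivity
  rw [abs_of_pos hpos, one_div, ← Real.rpow_neg hpos.le, ← Real.rpow_natCast,
    ← Real.rpow_mul hpos.le]
  congr 1
  push_cast
  ring

theorem tendsto_tsum_sq_rpow_nat_add (κ c : ℝ) :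
    Tendsto (fun N : ℕ => ∑' n : ℕ, (((n : ℝ) + (c + N)) ^ (κ - 1)) ^ 2) atTop (nhds 0) :=
  (tendsto_sum_nat_add fun n : ℕ => (((n : ℝ) + c) ^ (κ - 1)) ^ 2).congr fun N => by
    simp only [Nat.cast_add, add_assoc, add_comm c]

theorem inv_le_rpow_sub_one (hκ : 0 ≤ κ) {s : ℝ} (hs : 1 ≤ s) : s⁻¹ ≤ s ^ (κ - 1) := by
  rw [← Real.rpow_neg_one]
  exact Real.rpow_le_rpow_of_exponent_le hs (by linarith)

end PowerWeights

/-- Kronecker's lemma for the weights `n + 1`. -/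
theorem tendsto_average_zero_of_tendsto_sum_div {b : ℕ → ℝ} {l : ℝ}
    (h : Tendsto (fun n => ∑ j ∈ Finset.range n, b j / (j + 1)) atTop (nhds l)) :
    Tendsto (fun n : ℕ => (n : ℝ)⁻¹ * ∑ j ∈ Finset.range n, b j) atTop (nhds 0) := by
  set T : ℕ → ℝ := fun n => ∑ j ∈ Finset.range n, b j / (j + 1)
  have abel (n : ℕ) : ∑ j ∈ Finset.range n, b j = n * T n - ∑ j ∈ Finset.range n, T j := by
    induction n with
    | zero => simp
    | succ n ih =>
      rw [Finset.sum_range_succ, Finset.sum_range_succ, ih,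
        show T (n + 1) = T n + b n / (n + 1) from Finset.sum_range_succ _ _]
      push_cast
      field_simp
      ring
  have hlim := h.sub h.cesaro
  rw [sub_self] at hlim
  refine hlim.congr' ((eventually_gt_atTop 0).mono fun n hn => ?_)
  have hn0 : (n : ℝ) ≠ 0 := Nat.cast_ne_zero.2 hn.ne'
  simp only [abel, mul_sub, inv_mul_cancel_left₀ hn0]

section MartingaleDifference

variable {Ω : Type*} {mΩ : MeasurableSpace Ω} {μ : Measure Ω} {F : Filtration ℕ mΩ}
  {D : ℕ → Ω → ℝ}

/-- Square-integrable martingale differences; `D n` is the increment from time `n` to time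
`n + 1`, so that it is `F (n + 1)`-measurable with zero conditional mean given `F n`. -/
structure IsL2MartingaleDiff (D : ℕ → Ω → ℝ) (F : Filtration ℕ mΩ) (μ : Measure Ω) : Prop where
  stronglyMeasurable : ∀ n, StronglyMeasurable[F (n + 1)] (D n)
  memLp : ∀ n, MemLp (D n) 2 μ
  condExp_ae_eq_zero : ∀ n, μ[D n | F n] =ᵐ[μ] 0

/-- The filtration seen from time `N` on. -/
def shiftFiltration (F : Filtration ℕ mΩ) (N : ℕ) : Filtration ℕ mΩ where
  seq n := F (N + n)
  mono' _ _ h := F.mono (Nat.add_le_add_left h N)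
  le' n := F.le (N + n)

namespace IsL2MartingaleDiff

theorem const_mul (hD : IsL2MartingaleDiff D F μ) (v : ℕ → ℝ) :
    IsL2MartingaleDiff (fun n ω => v n * D n ω) F μ where
  stronglyMeasurable n := (hD.stronglyMeasurable n).const_mul (v n)
  memLp n := (hD.memLp n).const_mul (v n)
  condExp_ae_eq_zero n := by
    filter_upwards [condExp_smul (μ := μ) (v n) (D n) (F n), hD.condExp_ae_eq_zero n] with ω h h0
    rw [Pi.smul_apply, h0, Pi.zero_apply, smul_zero] at h
    exact h

theorem neg (hD : IsL2MartingaleDiff D F μ) : IsL2MartingaleDiff (fun n ω => -D n ω) F μ := by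
  simpa only [neg_one_mul] using hD.const_mul fun _ => -1

theorem shift (hD : IsL2MartingaleDiff D F μ) (N : ℕ) :
    IsL2MartingaleDiff (fun n => D (N + n)) (shiftFiltration F N) μ where
  stronglyMeasurable n := hD.stronglyMeasurable (N + n)
  memLp n := hD.memLp (N + n)
  condExp_ae_eq_zero n := hD.condExp_ae_eq_zero (N + n)

theorem restrict [IsFiniteMeasure μ] (hD : IsL2MartingaleDiff D F μ) {H : Set Ω}
    (hH : MeasurableSet[F 0] H) : IsL2MartingaleDiff D F (μ.restrict H) where
  stronglyMeasurable := hD.stronglyMeasurable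
  memLp n := (hD.memLp n).restrict H
  condExp_ae_eq_zero n :=
    (condExp_restrict_ae_eq_restrict (F.le n) (F.mono (Nat.zero_le n) H hH)
      ((hD.memLp n).integrable one_le_two)).trans (ae_restrict_of_ae (hD.condExp_ae_eq_zero n))

theorem stronglyMeasurable_sum (hD : IsL2MartingaleDiff D F μ) (n : ℕ) :
    StronglyMeasurable[F n] fun ω => ∑ j ∈ Finset.range n, D j ω :=
  Finset.stronglyMeasurable_fun_sum _ fun j hj =>
    (hD.stronglyMeasurable j).mono (F.mono (Finset.mem_range.1 hj))

theorem memLp_sum (hD : IsL2MartingaleDiff D F μ) (n : ℕ) :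
    MemLp (fun ω => ∑ j ∈ Finset.range n, D j ω) 2 μ :=
  memLp_finsetSum _ fun j _ => hD.memLp j

variable [IsFiniteMeasure μ]

theorem setIntegral_sum_mul_eq_zero (hD : IsL2MartingaleDiff D F μ) {n : ℕ} {s : Set Ω}
    (hs : MeasurableSet[F n] s) :
    ∫ ω in s, (∑ j ∈ Finset.range n, D j ω) * D n ω ∂μ = 0 := by
  set M : Ω → ℝ := fun ω => ∑ j ∈ Finset.range n, D j ω
  have hint : Integrable (M * D n) μ := (hD.memLp_sum n).integrable_mul (hD.memLp n)
  have hcond : μ[M * D n | F n] =ᵐ[μ] 0 := by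
    filter_upwards [condExp_mul_of_stronglyMeasurable_left (hD.stronglyMeasurable_sum n) hint
      ((hD.memLp n).integrable one_le_two), hD.condExp_ae_eq_zero n] with ω h h0
    rw [h, Pi.mul_apply, h0, Pi.zero_apply, mul_zero]
  calc ∫ ω in s, M ω * D n ω ∂μ = ∫ ω in s, (μ[M * D n | F n]) ω ∂μ :=
        (setIntegral_condExp (F.le n) hint hs).symm
    _ = 0 := by rw [integral_congr_ae (ae_restrict_of_ae hcond)]; simp

theorem setIntegral_sq_sum_succ (hD : IsL2MartingaleDiff D F μ) {n : ℕ} {s : Set Ω}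
    (hs : MeasurableSet[F n] s) :
    ∫ ω in s, (∑ j ∈ Finset.range (n + 1), D j ω) ^ 2 ∂μ =
      ∫ ω in s, (∑ j ∈ Finset.range n, D j ω) ^ 2 ∂μ + ∫ ω in s, D n ω ^ 2 ∂μ := by
  have hsum := ((hD.memLp_sum n).integrable_sq.integrableOn (s := s))
  have hsq := ((hD.memLp n).integrable_sq.integrableOn (s := s))
  have hmul := (((hD.memLp_sum n).integrable_mul (hD.memLp n)).integrableOn (s := s)).const_mul 2
  calc ∫ ω in s, (∑ j ∈ Finset.range (n + 1), D j ω) ^ 2 ∂μ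
      = ∫ ω in s, ((∑ j ∈ Finset.range n, D j ω) ^ 2 + D n ω ^ 2
          + 2 * ((∑ j ∈ Finset.range n, D j ω) * D n ω)) ∂μ := by
        congr 1 with ω
        rw [Finset.sum_range_succ]
        ring
    _ = _ := by
        have hsplit := integral_add (hsum.add hsq) hmul
        simp only [Pi.add_apply, Pi.mul_apply] at hsplit
        rw [hsplit, integral_add hsum hsq, integral_const_mul, hD.setIntegral_sum_mul_eq_zero hs,
          mul_zero, add_zero]

theorem integral_sq_sum (hD : IsL2MartingaleDiff D F μ) (n : ℕ) :
    ∫ ω, (∑ j ∈ Finset.range n, D j ω) ^ 2 ∂μ = ∑ j ∈ Finset.range n, ∫ ω, D j ω ^ 2 ∂μ := by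
  induction n with
  | zero => simp
  | succ n ih =>
    rw [Finset.sum_range_succ, ← ih]
    simpa only [Measure.restrict_univ] using hD.setIntegral_sq_sum_succ MeasurableSet.univ

theorem submartingale_sq_sum (hD : IsL2MartingaleDiff D F μ) :
    Submartingale (fun n ω => (∑ j ∈ Finset.range n, D j ω) ^ 2) F μ := by
  refine submartingale_of_setIntegral_le_succ (fun n => (hD.stronglyMeasurable_sum n).pow 2)
    (fun n => (hD.memLp_sum n).integrable_sq) fun n s hs => ?_
  rw [hD.setIntegral_sq_sum_succ hs]
  exact le_add_of_nonneg_right (integral_nonneg fun ω => sq_nonneg _)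

theorem measure_exists_le_abs_sum_le (hD : IsL2MartingaleDiff D F μ) (n : ℕ) {b : ℝ}
    (hb : 0 < b) :
    μ {ω | ∃ k ≤ n, b ≤ |∑ j ∈ Finset.range k, D j ω|} ≤
      ENNReal.ofReal ((∑ j ∈ Finset.range n, ∫ ω, D j ω ^ 2 ∂μ) / b ^ 2) := by
  have hb2 : 0 < b ^ 2 := by positivity
  have hset : {ω | ∃ k ≤ n, b ≤ |∑ j ∈ Finset.range k, D j ω|} =
      {ω | ((b ^ 2).toNNReal : ℝ) ≤ (Finset.range (n + 1)).sup' Finset.nonempty_range_add_one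
        fun k => (∑ j ∈ Finset.range k, D j ω) ^ 2} := by
    ext ω
    simp only [Set.mem_ofPred_eq, Real.coe_toNNReal _ hb2.le, Finset.le_sup'_iff, Finset.mem_range,
      Nat.lt_succ_iff, sq_le_sq, abs_of_pos hb]
  have hmax := maximal_ineq hD.submartingale_sq_sum (fun n ω => sq_nonneg _)
    (ε := (b ^ 2).toNNReal) n
  have hint := setIntegral_le_integral (s := {ω | ∃ k ≤ n, b ≤ |∑ j ∈ Finset.range k, D j ω|})
    (hD.memLp_sum n).integrable_sq (ae_of_all _ fun ω => sq_nonneg _)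
  rw [← hset] at hmax
  rw [ENNReal.ofReal_div_of_pos hb2, ENNReal.le_div_iff_mul_le
    (.inl (ENNReal.ofReal_pos.2 hb2).ne') (.inl ENNReal.ofReal_ne_top), mul_comm,
    ← hD.integral_sq_sum]
  exact hmax.trans (ENNReal.ofReal_le_ofReal hint)

theorem measure_exists_le_abs_sum_le_of_sum_le (hD : IsL2MartingaleDiff D F μ) {V b : ℝ}
    (hV : ∀ n, ∑ j ∈ Finset.range n, ∫ ω, D j ω ^ 2 ∂μ ≤ V) (hb : 0 < b) :
    μ {ω | ∃ n, b ≤ |∑ j ∈ Finset.range n, D j ω|} ≤ ENNReal.ofReal (V / b ^ 2) := by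
  have hunion : {ω | ∃ n, b ≤ |∑ j ∈ Finset.range n, D j ω|} =
      ⋃ n, {ω | ∃ k ≤ n, b ≤ |∑ j ∈ Finset.range k, D j ω|} := by
    ext ω
    simp only [Set.mem_ofPred_eq, Set.mem_iUnion]
    exact ⟨fun ⟨n, h⟩ => ⟨n, n, le_rfl, h⟩, fun ⟨_, k, _, h⟩ => ⟨k, h⟩⟩
  have hmono : Monotone fun n => {ω | ∃ k ≤ n, b ≤ |∑ j ∈ Finset.range k, D j ω|} :=
    fun _ _ hab _ ⟨k, hk, h⟩ => ⟨k, hk.trans hab, h⟩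
  rw [hunion, hmono.measure_iUnion]
  exact iSup_le fun n => (hD.measure_exists_le_abs_sum_le n hb).trans
    (ENNReal.ofReal_le_ofReal (div_le_div_of_nonneg_right (hV n) (sq_nonneg b)))

theorem martingale_sum (hD : IsL2MartingaleDiff D F μ) :
    Martingale (fun n ω => ∑ j ∈ Finset.range n, D j ω) F μ := by
  refine martingale_of_condExp_sub_eq_zero_nat hD.stronglyMeasurable_sum
    (fun n => (hD.memLp_sum n).integrable one_le_two) fun n => ?_
  have hdiff : ((fun ω => ∑ j ∈ Finset.range (n + 1), D j ω) -
      fun ω => ∑ j ∈ Finset.range n, D j ω) = D n := by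
    ext ω
    simp [Finset.sum_range_succ]
  rw [hdiff]
  exact hD.condExp_ae_eq_zero n

theorem ae_exists_tendsto_sum (hD : IsL2MartingaleDiff D F μ) {V : ℝ}
    (hV : ∀ n, ∑ j ∈ Finset.range n, ∫ ω, D j ω ^ 2 ∂μ ≤ V) :
    ∀ᵐ ω ∂μ, ∃ l, Tendsto (fun n => ∑ j ∈ Finset.range n, D j ω) atTop (nhds l) := by
  refine hD.martingale_sum.submartingale.exists_ae_tendsto_of_bdd
    (R := (μ.real univ + V).toNNReal) fun n => ?_
  have hint : Integrable (fun ω => ∑ j ∈ Finset.range n, D j ω) μ :=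
    (hD.memLp_sum n).integrable one_le_two
  rw [eLpNorm_one_eq_lintegral_enorm, ← ofReal_integral_norm_eq_lintegral_enorm hint]
  refine ENNReal.ofReal_le_ofReal ?_
  calc ∫ ω, ‖∑ j ∈ Finset.range n, D j ω‖ ∂μ
      ≤ ∫ ω, (1 + (∑ j ∈ Finset.range n, D j ω) ^ 2) ∂μ := by
        refine integral_mono hint.norm ((integrable_const 1).add (hD.memLp_sum n).integrable_sq)
          fun ω => ?_
        dsimp only
        rw [Real.norm_eq_abs, ← sq_abs]
        nlinarith [sq_nonneg (|∑ j ∈ Finset.range n, D j ω| - 1),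
          abs_nonneg (∑ j ∈ Finset.range n, D j ω)]
    _ = μ.real univ + ∑ j ∈ Finset.range n, ∫ ω, D j ω ^ 2 ∂μ := by
        rw [integral_add (integrable_const 1) (hD.memLp_sum n).integrable_sq, hD.integral_sq_sum]
        simp
    _ ≤ μ.real univ + V := by gcongr; exact hV n

section Bounded

variable {B : ℝ} {v : ℕ → ℝ}

theorem sum_integral_sq_const_mul_le (hDb : ∀ n, ∀ᵐ ω ∂μ, |D n ω| ≤ B)
    (hv : Summable fun n => v n ^ 2) (n : ℕ) :
    ∑ j ∈ Finset.range n, ∫ ω, (v j * D j ω) ^ 2 ∂μ ≤ B ^ 2 * (∑' j, v j ^ 2) * μ.real univ := by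
  have hterm (j : ℕ) : ∫ ω, (v j * D j ω) ^ 2 ∂μ ≤ v j ^ 2 * (B ^ 2 * μ.real univ) := by
    calc ∫ ω, (v j * D j ω) ^ 2 ∂μ ≤ ∫ _, v j ^ 2 * B ^ 2 ∂μ := by
          refine integral_mono_of_nonneg (ae_of_all _ fun ω => sq_nonneg _) (integrable_const _) ?_
          filter_upwards [hDb j] with ω hω
          rw [mul_pow, ← sq_abs (D j ω)]
          gcongr
      _ = v j ^ 2 * (B ^ 2 * μ.real univ) := by rw [integral_const, smul_eq_mul]; ring
  calc ∑ j ∈ Finset.range n, ∫ ω, (v j * D j ω) ^ 2 ∂μ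
      ≤ ∑ j ∈ Finset.range n, v j ^ 2 * (B ^ 2 * μ.real univ) :=
        Finset.sum_le_sum fun j _ => hterm j
    _ ≤ (∑' j, v j ^ 2) * (B ^ 2 * μ.real univ) := by
        rw [← Finset.sum_mul]
        gcongr
        exact hv.sum_le_tsum _ fun j _ => sq_nonneg _
    _ = B ^ 2 * (∑' j, v j ^ 2) * μ.real univ := by ring

theorem measureReal_exists_le_abs_sum_const_mul_le (hD : IsL2MartingaleDiff D F μ)
    (hDb : ∀ n, ∀ᵐ ω ∂μ, |D n ω| ≤ B) (hv : Summable fun n => v n ^ 2) {b : ℝ} (hb : 0 < b) :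
    μ.real {ω | ∃ n, b ≤ |∑ j ∈ Finset.range n, v j * D j ω|} ≤
      B ^ 2 * (∑' j, v j ^ 2) * μ.real univ / b ^ 2 :=
  ENNReal.toReal_le_of_le_ofReal (by positivity)
    ((hD.const_mul v).measure_exists_le_abs_sum_le_of_sum_le
      (sum_integral_sq_const_mul_le hDb hv) hb)

theorem ae_exists_tendsto_sum_const_mul (hD : IsL2MartingaleDiff D F μ)
    (hDb : ∀ n, ∀ᵐ ω ∂μ, |D n ω| ≤ B) (hv : Summable fun n => v n ^ 2) :
    ∀ᵐ ω ∂μ, ∃ l, Tendsto (fun n => ∑ j ∈ Finset.range n, v j * D j ω) atTop (nhds l) :=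
  (hD.const_mul v).ae_exists_tendsto_sum (sum_integral_sq_const_mul_le hDb hv)

theorem ae_tendsto_average_zero (hD : IsL2MartingaleDiff D F μ)
    (hDb : ∀ n, ∀ᵐ ω ∂μ, |D n ω| ≤ B) :
    ∀ᵐ ω ∂μ, Tendsto (fun n : ℕ => (n : ℝ)⁻¹ * ∑ j ∈ Finset.range n, D j ω) atTop (nhds 0) := by
  have hv : Summable fun n : ℕ => (((n : ℝ) + 1)⁻¹) ^ 2 := by
    simpa [Real.rpow_neg_one] using summable_sq_rpow_nat_add (κ := 0) (by norm_num) zero_lt_one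
  filter_upwards [hD.ae_exists_tendsto_sum_const_mul hDb hv] with ω ⟨l, hl⟩
  refine tendsto_average_zero_of_tendsto_sum_div (l := l) ?_
  simpa only [div_eq_inv_mul] using hl

end Bounded

end IsL2MartingaleDiff

theorem ae_abs_sub_le_of_condExp_ae_eq {m : MeasurableSpace Ω} {f e : Ω → ℝ} {R : ℝ}
    (hf : ∀ᵐ ω ∂μ, |f ω| ≤ R) (he : μ[f | m] =ᵐ[μ] e) : ∀ᵐ ω ∂μ, |f ω - e ω| ≤ 2 * R := by
  filter_upwards [hf, he, ae_bdd_abs_condExp_of_ae_bdd_abs (m := m) hf] with ω hfω heω hω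
  rw [heω] at hω
  linarith [abs_sub (f ω) (e ω)]

theorem isL2MartingaleDiff_sub [IsFiniteMeasure μ] {f e : ℕ → Ω → ℝ} {R : ℝ}
    (hf : ∀ n, StronglyMeasurable[F (n + 1)] (f n)) (he : ∀ n, StronglyMeasurable[F n] (e n))
    (hfR : ∀ n, ∀ᵐ ω ∂μ, |f n ω| ≤ R) (hfe : ∀ n, μ[f n | F n] =ᵐ[μ] e n) :
    IsL2MartingaleDiff (fun n ω => f n ω - e n ω) F μ where
  stronglyMeasurable n := (hf n).sub ((he n).mono (F.mono n.le_succ))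
  memLp n := MemLp.of_bound (((hf n).mono (F.le _)).sub ((he n).mono (F.le n))).aestronglyMeasurable
    (2 * R) (ae_abs_sub_le_of_condExp_ae_eq (hfR n) (hfe n))
  condExp_ae_eq_zero n := by
    have hfint : Integrable (f n) μ :=
      .of_bound ((hf n).mono (F.le _)).aestronglyMeasurable R (hfR n)
    have heint : Integrable (e n) μ := integrable_condExp.congr (hfe n)
    filter_upwards [condExp_sub hfint heint (F n), hfe n] with ω hω heω
    rw [condExp_of_stronglyMeasurable (F.le n) (he n) heint, Pi.sub_apply, heω, sub_self] at hω
    exact hω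

end MartingaleDifference

section RobbinsMonro

section Path

variable {x ξ : ℕ → ℝ} {g : ℝ → ℝ} {a z c δ κ : ℝ}

theorem tendsto_of_abs_noise_lt (hc : 2 ≤ c) (hκ0 : 0 ≤ κ) (hκ1 : κ ≤ 1)
    (hrec : ∀ n, x (n + 1) = x n + (g (x n) + ξ n) / (n + c))
    (hg : ∀ y ∈ Ico a z, 0 < g y ∧ g y ≤ κ * (z - y)) (hgcont : ContinuousOn g (Ico a z))
    (hδ : 0 < δ) (hx0 : x 0 ∈ Icc (a + δ) (z - δ))
    (hconv : ∃ l, Tendsto (fun n => ∑ j ∈ Finset.range n, ((j : ℝ) + c)⁻¹ * ξ j) atTop (nhds l))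
    (hnoise : ∀ n, |∑ j ∈ Finset.range n, ((j : ℝ) + c)⁻¹ * ξ j| < δ)
    (hscaled : ∀ n, |∑ j ∈ Finset.range n, ((j : ℝ) + c) ^ (κ - 1) * ξ j| < δ) :
    Tendsto x atTop (nhds z) := by
  simp only [← div_eq_inv_mul] at hconv hnoise
  have hs (n : ℕ) : 2 ≤ (n : ℝ) + c := hc.trans (le_add_of_nonneg_left n.cast_nonneg)
  have hs0 (n : ℕ) : 0 < (n : ℝ) + c := two_pos.trans_le (hs n)
  have hws (n : ℕ) : ((n + 1 : ℕ) + c - 1) ^ κ / ((n : ℝ) + c) = ((n : ℝ) + c) ^ (κ - 1) := by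
    rw [Real.rpow_sub_one (hs0 n).ne']
    congr 2
    push_cast
    ring
  refine tendsto_of_mem_Ico hrec hs0 (not_summable_one_div_nat_add c) (fun y hy => (hg y hy).1)
    hgcont hconv (mem_Ico_of_noise_small (w := fun n => ((n : ℝ) + c - 1) ^ κ) (κ := κ) hrec hs0
      (fun n => Real.rpow_pos_of_pos (by linarith [hs n]) κ) (fun n => ?_)
      (fun y hy => ⟨(hg y hy).1.le, (hg y hy).2⟩) (fun n => ?_) fun n => ?_)
  · have hsucc : ((n + 1 : ℕ) : ℝ) + c - 1 = n + c := by push_cast; ring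
    simp only [hsucc]
    exact rpow_sub_one_le_rpow_mul hκ0 hκ1 (one_le_two.trans (hs n))
  · linarith [(abs_lt.1 (hnoise n)).1, hx0.1]
  · simp only [hws]
    have hw0 : 1 ≤ (((0 : ℕ) : ℝ) + c - 1) ^ κ := Real.one_le_rpow (by linarith [hs 0]) hκ0
    have hzx : δ ≤ z - x 0 := by linarith [hx0.2]
    calc ∑ j ∈ Finset.range n, ((j : ℝ) + c) ^ (κ - 1) * ξ j
        < 1 * δ := by rw [one_mul]; exact (abs_lt.1 (hscaled n)).2
      _ ≤ (((0 : ℕ) : ℝ) + c - 1) ^ κ * (z - x 0) := by gcongr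

theorem deriv_eq_zero_of_touchpoint (hgz : g z = 0)
    (htouch : (∀ᶠ y in nhdsWithin z {z}ᶜ, 0 < g y) ∨ ∀ᶠ y in nhdsWithin z {z}ᶜ, g y < 0) :
    deriv g z = 0 := by
  refine IsLocalExtr.deriv_eq_zero (htouch.imp (fun h => ?_) fun h => ?_) <;>
    filter_upwards [eventually_nhdsWithin_iff.1 h] with y hy <;>
    rcases eq_or_ne y z with rfl | hne
  exacts [le_rfl, hgz.trans_le (hy hne).le, le_rfl, (hy hne).le.trans_eq hgz.symm]

theorem eventually_abs_le_mul_abs_sub_of_touchpoint (hdiff : DifferentiableAt ℝ g z)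
    (hgz : g z = 0)
    (htouch : (∀ᶠ y in nhdsWithin z {z}ᶜ, 0 < g y) ∨ ∀ᶠ y in nhdsWithin z {z}ᶜ, g y < 0)
    (hκ : 0 < κ) : ∀ᶠ y in nhds z, |g y| ≤ κ * |y - z| := by
  have hderiv := hdiff.hasDerivAt
  rw [deriv_eq_zero_of_touchpoint hgz htouch, hasDerivAt_iff_isLittleO] at hderiv
  simpa [hgz] using hderiv.def hκ

end Path

variable {Ω : Type*} {mΩ : MeasurableSpace Ω} {μ : Measure Ω} {F : Filtration ℕ mΩ}
  {x ξ : ℕ → Ω → ℝ} {g : ℝ → ℝ} {a z c B δ κ : ℝ}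

/-- A Robbins–Monro stochastic approximation scheme
`x (n + 1) = x n + (g (x n) + ξ n) / (n + c)` whose noise `ξ` is a sequence of martingale
differences bounded by `B`. -/
structure IsRobbinsMonro (x ξ : ℕ → Ω → ℝ) (g : ℝ → ℝ) (c B : ℝ) (F : Filtration ℕ mΩ)
    (μ : Measure Ω) : Prop where
  adapted : ∀ n, StronglyMeasurable[F n] (x n)
  noise : IsL2MartingaleDiff ξ F μ
  noise_bound : ∀ n, ∀ᵐ ω ∂μ, |ξ n ω| ≤ B
  recursion : ∀ n, ∀ᵐ ω ∂μ, x (n + 1) ω = x n ω + (g (x n ω) + ξ n ω) / (n + c)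

/-- `x` is within any prescribed distance of `t` with positive probability at arbitrarily late
deterministic times. -/
def IsFrequentlyNear (x : ℕ → Ω → ℝ) (μ : Measure Ω) (t : ℝ) : Prop :=
  ∀ δ > 0, ∃ᶠ n in atTop, 0 < μ {ω | |x n ω - t| < δ}

theorem IsFrequentlyNear.neg {t : ℝ} (h : IsFrequentlyNear x μ t) :
    IsFrequentlyNear (fun n ω => -x n ω) μ (-t) := by
  intro δ hδ
  simpa only [neg_sub_neg, abs_sub_comm t] using h δ hδ

namespace IsRobbinsMonro

theorem neg (h : IsRobbinsMonro x ξ g c B F μ) :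
    IsRobbinsMonro (fun n ω => -x n ω) (fun n ω => -ξ n ω) (fun y => -g (-y)) c B F μ where
  adapted n := (h.adapted n).neg
  noise := h.noise.neg
  noise_bound n := by simpa only [abs_neg] using h.noise_bound n
  recursion n := by
    filter_upwards [h.recursion n] with ω hω
    rw [hω, neg_neg]
    ring

theorem shift (h : IsRobbinsMonro x ξ g c B F μ) (N : ℕ) :
    IsRobbinsMonro (fun n => x (N + n)) (fun n => ξ (N + n)) g (c + N) B (shiftFiltration F N)
      μ where
  adapted n := h.adapted (N + n)
  noise := h.noise.shift N
  noise_bound n := h.noise_bound (N + n)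
  recursion n := by
    filter_upwards [h.recursion (N + n)] with ω hω
    rw [← add_assoc, hω]
    push_cast
    ring_nf

variable [IsFiniteMeasure μ]

theorem restrict (h : IsRobbinsMonro x ξ g c B F μ) {H : Set Ω} (hH : MeasurableSet[F 0] H) :
    IsRobbinsMonro x ξ g c B F (μ.restrict H) where
  adapted := h.adapted
  noise := h.noise.restrict hH
  noise_bound n := ae_restrict_of_ae (h.noise_bound n)
  recursion n := ae_restrict_of_ae (h.recursion n)

theorem measureReal_exists_le_abs_noise_le (h : IsRobbinsMonro x ξ g c B F μ) (hc : 0 < c)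
    (hκ : κ < 1 / 2) (hδ : 0 < δ)
    (hB : B ^ 2 * ∑' n : ℕ, (((n : ℝ) + c) ^ (κ - 1)) ^ 2 ≤ δ ^ 2 / 4) {v : ℕ → ℝ}
    (hv0 : ∀ n, 0 ≤ v n) (hv : ∀ n : ℕ, v n ≤ ((n : ℝ) + c) ^ (κ - 1)) :
    μ.real {ω | ∃ n, δ ≤ |∑ j ∈ Finset.range n, v j * ξ j ω|} ≤ μ.real univ / 4 := by
  have hsq (n : ℕ) : v n ^ 2 ≤ (((n : ℝ) + c) ^ (κ - 1)) ^ 2 :=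
    pow_le_pow_left₀ (hv0 n) (hv n) 2
  have hrpow := summable_sq_rpow_nat_add hκ hc
  have hsum : Summable fun n => v n ^ 2 := hrpow.of_nonneg_of_le (fun n => sq_nonneg _) hsq
  calc μ.real {ω | ∃ n, δ ≤ |∑ j ∈ Finset.range n, v j * ξ j ω|}
      ≤ B ^ 2 * (∑' n, v n ^ 2) * μ.real univ / δ ^ 2 :=
        h.noise.measureReal_exists_le_abs_sum_const_mul_le h.noise_bound hsum hδ
    _ ≤ δ ^ 2 / 4 * μ.real univ / δ ^ 2 := by
        gcongr
        exact (mul_le_mul_of_nonneg_left (hsum.tsum_le_tsum hsq hrpow) (sq_nonneg B)).trans hB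
    _ = μ.real univ / 4 := by field_simp

theorem measure_tendsto_pos_of_initial_mem [NeZero μ] (h : IsRobbinsMonro x ξ g c B F μ)
    (hc : 2 ≤ c) (hκ0 : 0 ≤ κ) (hκ : κ < 1 / 2)
    (hg : ∀ y ∈ Ico a z, 0 < g y ∧ g y ≤ κ * (z - y)) (hgcont : ContinuousOn g (Ico a z))
    (hδ : 0 < δ) (hx0 : ∀ᵐ ω ∂μ, x 0 ω ∈ Icc (a + δ) (z - δ))
    (hB : B ^ 2 * ∑' n : ℕ, (((n : ℝ) + c) ^ (κ - 1)) ^ 2 ≤ δ ^ 2 / 4) :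
    0 < μ {ω | Tendsto (fun n => x n ω) atTop (nhds z)} := by
  have hc0 : 0 < c := two_pos.trans_le hc
  have hinv (n : ℕ) : ((n : ℝ) + c)⁻¹ ≤ ((n : ℝ) + c) ^ (κ - 1) :=
    inv_le_rpow_sub_one hκ0 ((one_le_two.trans hc).trans (le_add_of_nonneg_left n.cast_nonneg))
  have hbad := h.measureReal_exists_le_abs_noise_le hc0 hκ hδ hB (fun n => by positivity) hinv
  have hbad' := h.measureReal_exists_le_abs_noise_le hc0 hκ hδ hB (fun n => by positivity)
    fun _ => le_rfl
  set bad := {ω | ∃ n, δ ≤ |∑ j ∈ Finset.range n, ((j : ℝ) + c)⁻¹ * ξ j ω|}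
  set bad' := {ω | ∃ n, δ ≤ |∑ j ∈ Finset.range n, ((j : ℝ) + c) ^ (κ - 1) * ξ j ω|}
  have hconv := h.noise.ae_exists_tendsto_sum_const_mul h.noise_bound
    (v := fun n : ℕ => ((n : ℝ) + c)⁻¹)
    ((summable_sq_rpow_nat_add hκ hc0).of_nonneg_of_le (fun n => sq_nonneg _)
      fun n => pow_le_pow_left₀ (by positivity) (hinv n) 2)
  have hcover : ∀ᵐ ω ∂μ, ω ∈ {ω | Tendsto (fun n => x n ω) atTop (nhds z)} ∪ (bad ∪ bad') := by
    filter_upwards [hconv, ae_all_iff.2 h.recursion, hx0] with ω hω hrec hω0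
    refine or_iff_not_imp_right.2 fun hgood => ?_
    simp only [bad, bad', mem_union, Set.mem_ofPred_eq, not_or, not_exists, not_le] at hgood
    exact tendsto_of_abs_noise_lt hc hκ0 (by linarith) hrec hg hgcont hδ hω0 hω hgood.1 hgood.2
  by_contra hnull
  have hpos : 0 < μ.real univ := measureReal_univ_pos
  have : μ.real univ ≤ 0 + (μ.real bad + μ.real bad') := calc
    μ.real univ = μ.real ({ω | Tendsto (fun n => x n ω) atTop (nhds z)} ∪ (bad ∪ bad')) :=
        (measureReal_congr (eventuallyEq_univ.2 hcover)).symm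
    _ ≤ μ.real {ω | Tendsto (fun n => x n ω) atTop (nhds z)} + (μ.real bad + μ.real bad') :=
        (measureReal_union_le _ _).trans (by gcongr; exact measureReal_union_le _ _)
    _ = 0 + (μ.real bad + μ.real bad') := by
        rw [measureReal_def, nonpos_iff_eq_zero.1 (not_lt.1 hnull), ENNReal.toReal_zero]
  linarith

theorem measure_tendsto_pos_of_pos_left (h : IsRobbinsMonro x ξ g c B F μ) (hgcont : Continuous g)
    (hκ0 : 0 ≤ κ) (hκ : κ < 1 / 2) (hg : ∀ᶠ y in nhdsWithin z (Iio z), 0 < g y ∧ g y ≤ κ * (z - y))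
    (hnear : ∀ᶠ t in nhdsWithin z (Iio z), IsFrequentlyNear x μ t) :
    0 < μ {ω | Tendsto (fun n => x n ω) atTop (nhds z)} := by
  obtain ⟨a, haz : a < z, ha⟩ := mem_nhdsLT_iff_exists_Ico_subset.1 (hg.and hnear)
  set t := (a + z) / 2
  set δ := (z - a) / 4
  have hδ : 0 < δ := by simp only [δ]; linarith
  have ht : IsFrequentlyNear x μ t :=
    (ha ⟨by simp only [t]; linarith, by simp only [t]; linarith⟩).2
  have htail : ∀ᶠ N : ℕ in atTop,
      B ^ 2 * ∑' n : ℕ, (((n : ℝ) + (c + N)) ^ (κ - 1)) ^ 2 ≤ δ ^ 2 / 4 := by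
    have hlim := (tendsto_tsum_sq_rpow_nat_add κ c).const_mul (B ^ 2)
    rw [mul_zero] at hlim
    exact hlim.eventually_le_const (by positivity)
  have hlate : ∀ᶠ N : ℕ in atTop, 2 ≤ c + N :=
    (tendsto_atTop_add_const_left _ c tendsto_natCast_atTop_atTop).eventually_ge_atTop 2
  obtain ⟨N, hN, hNtail, hNc⟩ := ((ht δ hδ).and_eventually (htail.and hlate)).exists
  set H := {ω | |x N ω - t| < δ}
  have hH : MeasurableSet[shiftFiltration F N 0] H :=
    (h.adapted N).measurable
      (measurableSet_lt (by fun_prop) measurable_const : MeasurableSet {y : ℝ | |y - t| < δ})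
  have : NeZero (μ.restrict H) := ⟨fun h0 => hN.ne' (Measure.restrict_eq_zero.1 h0)⟩
  have hpos := ((h.shift N).restrict hH).measure_tendsto_pos_of_initial_mem hNc hκ0 hκ
    (fun y hy => (ha hy).1) hgcont.continuousOn hδ
    ((ae_restrict_mem ((shiftFiltration F N).le 0 H hH)).mono fun ω hω => ?_) hNtail
  · refine (hpos.trans_le (Measure.restrict_apply_le _ _)).trans_le (measure_mono fun ω hω => ?_)
    simp only [Set.mem_ofPred_eq, add_comm N] at hω
    exact (tendsto_add_atTop_iff_nat N).1 hω
  · have := abs_lt.1 (show |x N ω - t| < δ from hω)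
    constructor <;> simp only [t, δ, add_zero] at this ⊢ <;> linarith

theorem measure_tendsto_pos_of_neg_right (h : IsRobbinsMonro x ξ g c B F μ)
    (hgcont : Continuous g) (hκ0 : 0 ≤ κ) (hκ : κ < 1 / 2)
    (hg : ∀ᶠ y in nhdsWithin z (Ioi z), g y < 0 ∧ κ * (z - y) ≤ g y)
    (hnear : ∀ᶠ t in nhdsWithin z (Ioi z), IsFrequentlyNear x μ t) :
    0 < μ {ω | Tendsto (fun n => x n ω) atTop (nhds z)} := by
  have hneg : Tendsto Neg.neg (nhdsWithin (-z) (Iio (-z))) (nhdsWithin z (Ioi z)) :=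
    tendsto_neg_nhdsLT_neg
  have hpos := h.neg.measure_tendsto_pos_of_pos_left (z := -z)
    (hgcont.comp continuous_neg).neg hκ0 hκ
    ((hneg.eventually hg).mono fun y hy => ⟨neg_pos.2 hy.1, by linarith [hy.2]⟩)
    ((hneg.eventually hnear).mono fun t ht => by simpa only [neg_neg] using ht.neg)
  simpa only [tendsto_neg_iff] using hpos

theorem measure_tendsto_pos_of_touchpoint (h : IsRobbinsMonro x ξ g c B F μ)
    (hgcont : Continuous g) (hdiff : DifferentiableAt ℝ g z) (hgz : g z = 0)
    (htouch : (∀ᶠ y in nhdsWithin z {z}ᶜ, 0 < g y) ∨ ∀ᶠ y in nhdsWithin z {z}ᶜ, g y < 0)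
    (hnear : ∀ᶠ t in nhds z, IsFrequentlyNear x μ t) :
    0 < μ {ω | Tendsto (fun n => x n ω) atTop (nhds z)} := by
  have hflat : ∀ᶠ y in nhds z, |g y| ≤ 1 / 4 * |y - z| :=
    eventually_abs_le_mul_abs_sub_of_touchpoint hdiff hgz htouch (by norm_num)
  rcases htouch with hpos | hneg
  · refine h.measure_tendsto_pos_of_pos_left hgcont (κ := 1 / 4) (by norm_num) (by norm_num) ?_
      (hnear.filter_mono nhdsWithin_le_nhds)
    filter_upwards [hpos.filter_mono (nhdsLT_le_nhdsNE z), hflat.filter_mono nhdsWithin_le_nhds,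
      self_mem_nhdsWithin] with y hy hyz hlt
    rw [abs_sub_comm, abs_of_pos (sub_pos.2 hlt)] at hyz
    exact ⟨hy, (le_abs_self _).trans hyz⟩
  · refine h.measure_tendsto_pos_of_neg_right hgcont (κ := 1 / 4) (by norm_num) (by norm_num) ?_
      (hnear.filter_mono nhdsWithin_le_nhds)
    filter_upwards [hneg.filter_mono (nhdsGT_le_nhdsNE z), hflat.filter_mono nhdsWithin_le_nhds,
      self_mem_nhdsWithin] with y hy hyz hgt
    rw [abs_of_pos (sub_pos.2 hgt)] at hyz
    exact ⟨hy, by linarith [neg_abs_le (g y)]⟩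

end IsRobbinsMonro

end RobbinsMonro

section Bernstein

open Polynomial

theorem eval_bernsteinPolynomial (m k : ℕ) (y : ℝ) :
    (bernsteinPolynomial ℝ m k).eval y = (m.choose k : ℝ) * y ^ k * (1 - y) ^ (m - k) := by
  simp [bernsteinPolynomial]

theorem eval_bernsteinPolynomial_pos {m k : ℕ} (hk : k ≤ m) {y : ℝ} (hy : y ∈ Ioo (0 : ℝ) 1) :
    0 < (bernsteinPolynomial ℝ m k).eval y := by
  rw [eval_bernsteinPolynomial]
  have hchoose : (0 : ℝ) < m.choose k := Nat.cast_pos.2 (Nat.choose_pos hk)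
  have hy0 := hy.1
  have hy1 := sub_pos.2 hy.2
  positivity

theorem sum_eval_bernsteinPolynomial (m : ℕ) (y : ℝ) :
    ∑ k : Fin (m + 1), (bernsteinPolynomial ℝ m k).eval y = 1 := by
  rw [Fin.sum_univ_eq_sum_range fun k => (bernsteinPolynomial ℝ m k).eval y,
    ← eval_finsetSum, bernsteinPolynomial.sum, eval_one]

theorem sum_mul_eval_bernsteinPolynomial (m : ℕ) (y : ℝ) :
    ∑ k : Fin (m + 1), (k : ℝ) * (bernsteinPolynomial ℝ m k).eval y = m * y := by
  rw [Fin.sum_univ_eq_sum_range fun k => (k : ℝ) * (bernsteinPolynomial ℝ m k).eval y]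
  simpa [eval_finsetSum] using congrArg (eval y) (bernsteinPolynomial.sum_smul ℝ m)

theorem sum_apply_mul_eval_bernsteinPolynomial {m : ℕ} (hm : m ≠ 0) (p : ℕ → ℝ) (y : ℝ) :
    ∑ k : Fin (m + 1), p k * (bernsteinPolynomial ℝ m k).eval y = y + 2 * polyP m p y := by
  have hm' : (m : ℝ) ≠ 0 := Nat.cast_ne_zero.2 hm
  have hpoly : 2 * polyP m p y =
      ∑ k : Fin (m + 1), (p k * (bernsteinPolynomial ℝ m k).eval y
        - (k : ℝ) * (bernsteinPolynomial ℝ m k).eval y / m) := by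
    rw [polyP, ← mul_assoc, mul_one_div_cancel two_ne_zero, one_mul, Finset.sum_range]
    refine Finset.sum_congr rfl fun k _ => ?_
    rw [eval_bernsteinPolynomial]
    ring
  rw [hpoly, Finset.sum_sub_distrib, ← Finset.sum_div, sum_mul_eval_bernsteinPolynomial,
    mul_div_cancel_left₀ y hm']
  ring

theorem differentiable_polyP (m : ℕ) (p : ℕ → ℝ) : Differentiable ℝ (polyP m p) := by
  unfold polyP
  fun_prop

end Bernstein

namespace PAProcess

variable {Ω : Type} [MeasurableSpace Ω] (P : PAProcess Ω)

instance : IsProbabilityMeasure P.μ := P.isProb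

theorem m_ne_zero : P.m ≠ 0 := Nat.one_le_iff_ne_zero.1 P.hm

theorem differentiable_poly : Differentiable ℝ P.poly :=
  differentiable_polyP P.m P.p

theorem two_mul_m_pos : (0 : ℝ) < 2 * P.m :=
  mul_pos two_pos (Nat.cast_pos.2 P.hm)

theorem S_succ (n : ℕ) : P.S (n + 1) = P.S n + 2 * P.m := by
  simp only [S]
  ring

theorem tendsto_S_atTop : Tendsto (fun n => (P.S n : ℝ)) atTop atTop := by
  refine tendsto_natCast_atTop_atTop.comp (tendsto_atTop_mono (fun n => ?_) tendsto_id)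
  have hm := P.hm
  simp only [S, id]
  nlinarith

theorem x_mul_S (n : ℕ) (ω : Ω) : P.x n ω * P.S n = P.X n ω :=
  div_mul_cancel_of_imp fun h =>
    Nat.cast_eq_zero.2 (Nat.le_zero.1 ((P.hXle n ω).trans_eq (Nat.cast_eq_zero.1 h)))

theorem stronglyMeasurable_x (n : ℕ) : StronglyMeasurable[P.F n] (P.x n) :=
  ((measurable_of_countable fun v : ℕ => (v : ℝ) / P.S n).comp (P.adaptedX n)).stronglyMeasurable

/-- The possible results `(k, b)` of one step: the new node has `k` red neighbours, and is red
when `b = true`. -/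
abbrev Outcome : Type := Fin (P.m + 1) × Bool

/-- The red degree added by an outcome: one for each red neighbour, and the `m` edges
of the new node if it is red. -/
def degreeIncrement (o : P.Outcome) : ℕ := o.1 + o.2.toNat * P.m

/-- The event that step `n` changes the node count and the degree sum as prescribed by `o`. -/
def stepEvent (n : ℕ) (o : P.Outcome) : Set Ω :=
  {ω | P.A (n + 1) ω = P.A n ω + o.2.toNat ∧ P.X (n + 1) ω = P.X n ω + P.degreeIncrement o}

/-- The probability of the type in the outcome `o`, given its number of red neighbours. -/
def typeProb (o : P.Outcome) : ℝ := bif o.2 then P.p o.1 else 1 - P.p o.1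

/-- The probability of the outcome `o` when a proportion `y` of the total degree is red. -/
def outcomeProb (o : P.Outcome) (y : ℝ) : ℝ :=
  (bernsteinPolynomial ℝ P.m o.1).eval y * P.typeProb o

theorem typeProb_nonneg (o : P.Outcome) : 0 ≤ P.typeProb o := by
  obtain ⟨k, b⟩ := o
  have hp := P.hp k (Nat.lt_succ_iff.1 k.2)
  cases b
  exacts [sub_nonneg.2 hp.2, hp.1]

theorem degreeIncrement_le (o : P.Outcome) : P.degreeIncrement o ≤ 2 * P.m := by
  obtain ⟨k, b⟩ := o
  have hk : (k : ℕ) ≤ P.m := Nat.lt_succ_iff.1 k.2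
  cases b <;> simp only [degreeIncrement, Bool.toNat_true, Bool.toNat_false] <;> omega

theorem sum_outcomeProb (y : ℝ) : ∑ o, P.outcomeProb o y = 1 := by
  rw [Fintype.sum_prod_type, ← sum_eval_bernsteinPolynomial P.m y]
  refine Finset.sum_congr rfl fun k _ => ?_
  simp only [outcomeProb, typeProb, Fintype.sum_bool, cond_true, cond_false]
  ring

theorem sum_toNat_mul_outcomeProb (y : ℝ) :
    ∑ o : P.Outcome, (o.2.toNat : ℝ) * P.outcomeProb o y = y + 2 * P.poly y := by
  rw [Fintype.sum_prod_type, poly, ← sum_apply_mul_eval_bernsteinPolynomial P.m_ne_zero]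
  refine Finset.sum_congr rfl fun k _ => ?_
  simp [outcomeProb, typeProb, mul_comm]

theorem sum_degreeIncrement_mul_outcomeProb (y : ℝ) :
    ∑ o, (P.degreeIncrement o : ℝ) * P.outcomeProb o y = 2 * P.m * (y + P.poly y) := by
  have hred : ∑ o : P.Outcome, ((o.1 : ℕ) : ℝ) * P.outcomeProb o y = P.m * y := by
    rw [Fintype.sum_prod_type, ← sum_mul_eval_bernsteinPolynomial]
    refine Finset.sum_congr rfl fun k _ => ?_
    simp only [outcomeProb, typeProb, Fintype.sum_bool, cond_true, cond_false]
    ring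
  calc ∑ o, (P.degreeIncrement o : ℝ) * P.outcomeProb o y
      = ∑ o : P.Outcome, ((o.1 : ℕ) : ℝ) * P.outcomeProb o y
          + P.m * ∑ o : P.Outcome, (o.2.toNat : ℝ) * P.outcomeProb o y := by
        rw [Finset.mul_sum, ← Finset.sum_add_distrib]
        refine Finset.sum_congr rfl fun o _ => ?_
        rw [degreeIncrement]
        push_cast
        ring
    _ = 2 * P.m * (y + P.poly y) := by
        rw [hred, sum_toNat_mul_outcomeProb]
        ring

theorem measurableSet_stepEvent (n : ℕ) (o : P.Outcome) :
    MeasurableSet[P.F (n + 1)] (P.stepEvent n o) := by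
  have hA := (P.adaptedA n).mono (P.F.mono n.le_succ) le_rfl
  have hX := (P.adaptedX n).mono (P.F.mono n.le_succ) le_rfl
  exact (measurableSet_eq_fun (P.adaptedA (n + 1)) (hA.add_const _)).inter
    (measurableSet_eq_fun (P.adaptedX (n + 1)) (hX.add_const _))

theorem integrable_indicator_stepEvent (n : ℕ) (o : P.Outcome) :
    Integrable ((P.stepEvent n o).indicator fun _ => (1 : ℝ)) P.μ :=
  (integrable_const 1).indicator (P.F.le _ _ (P.measurableSet_stepEvent n o))

theorem disjoint_stepEvent (n : ℕ) : Pairwise fun o o' =>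
    Disjoint (P.stepEvent n o) (P.stepEvent n o') := by
  rintro ⟨k, b⟩ ⟨k', b'⟩ hne
  refine Set.disjoint_left.2 fun ω h h' => hne ?_
  have htype : b.toNat = b'.toNat := Nat.add_left_cancel (h.1.symm.trans h'.1)
  have hdeg : (k : ℕ) + b.toNat * P.m = k' + b'.toNat * P.m :=
    Nat.add_left_cancel (h.2.symm.trans h'.2)
  rw [htype] at hdeg
  have hb : b = b' := by cases b <;> cases b' <;> simp_all
  exact Prod.ext (Fin.ext (Nat.add_right_cancel hdeg)) hb

theorem condExp_indicator_stepEvent (n : ℕ) (o : P.Outcome) :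
    P.μ[(P.stepEvent n o).indicator (fun _ => (1 : ℝ)) | P.F n] =ᵐ[P.μ]
      fun ω => P.outcomeProb o (P.x n ω) := by
  have hx (ω : Ω) : P.x n ω = (P.X n ω : ℝ) / ((P.X0 : ℝ) + P.Y0 + 2 * P.m * n) := by
    simp [x, S]
  obtain ⟨k, b⟩ := o
  have hk : (k : ℕ) ≤ P.m := Nat.lt_succ_iff.1 k.2
  simp only [outcomeProb, eval_bernsteinPolynomial, hx]
  cases b
  · simpa only [stepEvent, degreeIncrement, typeProb, Bool.toNat_false, zero_mul, add_zero,
      cond_false] using P.step_blue n k hk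
  · simpa only [stepEvent, degreeIncrement, typeProb, Bool.toNat_true, one_mul, add_assoc,
      cond_true] using P.step_red n k hk

theorem measureReal_inter_stepEvent {n : ℕ} {s : Set Ω} (hs : MeasurableSet[P.F n] s)
    (o : P.Outcome) :
    P.μ.real (s ∩ P.stepEvent n o) = ∫ ω in s, P.outcomeProb o (P.x n ω) ∂P.μ := by
  have hE := P.F.le _ _ (P.measurableSet_stepEvent n o)
  calc P.μ.real (s ∩ P.stepEvent n o)
      = ∫ ω in s, (P.stepEvent n o).indicator (fun _ => (1 : ℝ)) ω ∂P.μ := by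
        rw [integral_indicator hE, setIntegral_const, measureReal_restrict_apply hE, smul_eq_mul,
          mul_one, inter_comm]
    _ = ∫ ω in s, (P.μ[(P.stepEvent n o).indicator (fun _ => (1 : ℝ)) | P.F n]) ω ∂P.μ :=
        (setIntegral_condExp (P.F.le n) (P.integrable_indicator_stepEvent n o) hs).symm
    _ = ∫ ω in s, P.outcomeProb o (P.x n ω) ∂P.μ :=
        integral_congr_ae (ae_restrict_of_ae (P.condExp_indicator_stepEvent n o))

theorem ae_exists_mem_stepEvent (n : ℕ) : ∀ᵐ ω ∂P.μ, ∃ o, ω ∈ P.stepEvent n o := by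
  have hmeas (o : P.Outcome) := P.F.le _ _ (P.measurableSet_stepEvent n o)
  have hint (o : P.Outcome) : Integrable (fun ω => P.outcomeProb o (P.x n ω)) P.μ :=
    integrable_condExp.congr (P.condExp_indicator_stepEvent n o)
  have hunion : P.μ.real (⋃ o, P.stepEvent n o) = 1 := by
    have hprob (o : P.Outcome) := P.measureReal_inter_stepEvent (n := n) MeasurableSet.univ o
    simp only [univ_inter, Measure.restrict_univ] at hprob
    rw [measureReal_iUnion_fintype (P.disjoint_stepEvent n) hmeas, Finset.sum_congr rfl
      fun o _ => hprob o, ← integral_finsetSum _ fun o _ => hint o]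
    simp [P.sum_outcomeProb]
  have hfull : P.μ (⋃ o, P.stepEvent n o) = 1 := by
    rw [← ofReal_measureReal, hunion, ENNReal.ofReal_one]
  filter_upwards [(mem_ae_iff_prob_eq_one (MeasurableSet.iUnion hmeas)).2 hfull] with ω hω
  exact mem_iUnion.1 hω

theorem condExp_of_forall_mem_stepEvent {G : Ω → ℝ} {f : P.Outcome → ℝ} (n : ℕ)
    (hG : ∀ o, ∀ ω ∈ P.stepEvent n o, G ω = f o) :
    P.μ[G | P.F n] =ᵐ[P.μ] fun ω => ∑ o, f o * P.outcomeProb o (P.x n ω) := by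
  have hdecomp : G =ᵐ[P.μ] ∑ o, f o • (P.stepEvent n o).indicator fun _ => (1 : ℝ) := by
    filter_upwards [P.ae_exists_mem_stepEvent n] with ω ⟨o, ho⟩
    rw [Finset.sum_apply, Finset.sum_eq_single o]
    · simp [ho, hG o ω ho]
    · intro o' _ hne
      simp [Set.disjoint_right.1 (P.disjoint_stepEvent n hne) ho]
    · simp
  have hsmul : ∀ᵐ ω ∂P.μ, ∀ o,
      (P.μ[f o • (P.stepEvent n o).indicator (fun _ => (1 : ℝ)) | P.F n]) ω =
        f o * P.outcomeProb o (P.x n ω) := by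
    refine ae_all_iff.2 fun o => ?_
    filter_upwards [condExp_smul (μ := P.μ) (f o) ((P.stepEvent n o).indicator fun _ => (1 : ℝ))
      (P.F n), P.condExp_indicator_stepEvent n o] with ω h h'
    rw [h, Pi.smul_apply, h', smul_eq_mul]
  refine (condExp_congr_ae hdecomp).trans ?_
  filter_upwards [condExp_finsetSum (μ := P.μ) (s := Finset.univ)
    (fun o _ => (P.integrable_indicator_stepEvent n o).smul (f o)) (P.F n), hsmul] with ω h h'
  rw [h, Finset.sum_apply]
  exact Finset.sum_congr rfl fun o _ => h' o

theorem continuous_outcomeProb (o : P.Outcome) : Continuous (P.outcomeProb o) :=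
  (Polynomial.continuous _).mul continuous_const

theorem stronglyMeasurable_sum_outcomeProb (f : P.Outcome → ℝ) (n : ℕ) :
    StronglyMeasurable[P.F n] fun ω => ∑ o, f o * P.outcomeProb o (P.x n ω) :=
  (continuous_finsetSum _ fun o _ => continuous_const.mul
    (P.continuous_outcomeProb o)).comp_stronglyMeasurable (P.stronglyMeasurable_x n)

theorem ae_abs_le_of_forall_mem_stepEvent {G : Ω → ℝ} {f : P.Outcome → ℝ} {R : ℝ} (n : ℕ)
    (hG : ∀ o, ∀ ω ∈ P.stepEvent n o, G ω = f o) (hf : ∀ o, |f o| ≤ R) :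
    ∀ᵐ ω ∂P.μ, |G ω| ≤ R := by
  filter_upwards [P.ae_exists_mem_stepEvent n] with ω ⟨o, ho⟩
  rw [hG o ω ho]
  exact hf o

theorem isL2MartingaleDiff_of_forall_mem_stepEvent {G : ℕ → Ω → ℝ} {f : P.Outcome → ℝ} {R : ℝ}
    (hGm : ∀ n, StronglyMeasurable[P.F (n + 1)] (G n))
    (hG : ∀ n o, ∀ ω ∈ P.stepEvent n o, G n ω = f o) (hf : ∀ o, |f o| ≤ R) :
    IsL2MartingaleDiff (fun n ω => G n ω - ∑ o, f o * P.outcomeProb o (P.x n ω)) P.F P.μ :=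
  isL2MartingaleDiff_sub hGm (P.stronglyMeasurable_sum_outcomeProb f)
    (fun n => P.ae_abs_le_of_forall_mem_stepEvent n (hG n) hf)
    fun n => P.condExp_of_forall_mem_stepEvent n (hG n)

theorem ae_abs_sub_le_of_forall_mem_stepEvent {G : Ω → ℝ} {f : P.Outcome → ℝ} {R : ℝ} (n : ℕ)
    (hG : ∀ o, ∀ ω ∈ P.stepEvent n o, G ω = f o) (hf : ∀ o, |f o| ≤ R) :
    ∀ᵐ ω ∂P.μ, |G ω - ∑ o, f o * P.outcomeProb o (P.x n ω)| ≤ 2 * R :=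
  ae_abs_sub_le_of_condExp_ae_eq (P.ae_abs_le_of_forall_mem_stepEvent n hG hf)
    (P.condExp_of_forall_mem_stepEvent n hG)

/-- The noise in the evolution of `x`: the red degree added by step `n`, as a proportion of the
`2 * m` degrees added in total, centred at its conditional mean. -/
def degreeNoise (n : ℕ) (ω : Ω) : ℝ :=
  ((P.X (n + 1) ω : ℝ) - P.X n ω) / (2 * P.m) - (P.x n ω + P.poly (P.x n ω))

/-- The noise in the evolution of `A`: the indicator that step `n` adds a red node, centred at its
conditional mean. -/
def nodeNoise (n : ℕ) (ω : Ω) : ℝ :=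
  (P.A (n + 1) ω : ℝ) - P.A n ω - (P.x n ω + 2 * P.poly (P.x n ω))

theorem degreeNoise_eq_sub_sum :
    P.degreeNoise = fun n ω => ((P.X (n + 1) ω : ℝ) - P.X n ω) / (2 * P.m)
      - ∑ o, (P.degreeIncrement o : ℝ) / (2 * P.m) * P.outcomeProb o (P.x n ω) := by
  ext n ω
  simp only [div_mul_eq_mul_div, ← Finset.sum_div, sum_degreeIncrement_mul_outcomeProb,
    mul_div_cancel_left₀ _ P.two_mul_m_pos.ne', degreeNoise]

theorem nodeNoise_eq_sub_sum :
    P.nodeNoise = fun n ω => (P.A (n + 1) ω : ℝ) - P.A n ω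
      - ∑ o : P.Outcome, (o.2.toNat : ℝ) * P.outcomeProb o (P.x n ω) := by
  ext n ω
  rw [sum_toNat_mul_outcomeProb, nodeNoise]

theorem abs_degreeIncrement_div_le (o : P.Outcome) :
    |(P.degreeIncrement o : ℝ) / (2 * P.m)| ≤ 1 := by
  have hle : (P.degreeIncrement o : ℝ) ≤ 2 * P.m := mod_cast P.degreeIncrement_le o
  rw [abs_of_nonneg (by positivity)]
  exact div_le_one_of_le₀ hle P.two_mul_m_pos.le

theorem degree_sub_div_of_mem_stepEvent (n : ℕ) (o : P.Outcome) :
    ∀ ω ∈ P.stepEvent n o,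
      ((P.X (n + 1) ω : ℝ) - P.X n ω) / (2 * P.m) = P.degreeIncrement o / (2 * P.m) := by
  rintro ω ⟨-, hX⟩
  simp [hX]

theorem node_sub_of_mem_stepEvent (n : ℕ) (o : P.Outcome) :
    ∀ ω ∈ P.stepEvent n o, (P.A (n + 1) ω : ℝ) - P.A n ω = o.2.toNat := by
  rintro ω ⟨hA, -⟩
  simp [hA]

theorem stronglyMeasurable_natCast_sub {Z : ℕ → Ω → ℕ} (hZ : ∀ n, Measurable[P.F n] (Z n))
    (n : ℕ) : StronglyMeasurable[P.F (n + 1)] fun ω => (Z (n + 1) ω : ℝ) - Z n ω :=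
  ((measurable_from_nat.comp (hZ (n + 1))).sub (measurable_from_nat.comp
    ((hZ n).mono (P.F.mono n.le_succ) le_rfl))).stronglyMeasurable

/-- The offset `S_1 / (2m)`, for which `S_{n+1} = 2m(n + c)`. -/
def timeOffset : ℝ := ((P.X0 : ℝ) + P.Y0) / (2 * P.m) + 1

theorem timeOffset_pos : 0 < P.timeOffset := by
  unfold timeOffset
  positivity

theorem S_succ_eq_mul_timeOffset (n : ℕ) :
    (P.S (n + 1) : ℝ) = 2 * P.m * (n + P.timeOffset) := by
  have hdiv : 2 * P.m * (((P.X0 : ℝ) + P.Y0) / (2 * P.m)) = P.X0 + P.Y0 :=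
    mul_div_cancel₀ _ P.two_mul_m_pos.ne'
  rw [timeOffset, mul_add, mul_add, hdiv]
  simp only [S]
  push_cast
  ring

theorem x_succ (n : ℕ) (ω : Ω) :
    P.x (n + 1) ω =
      P.x n ω + (P.poly (P.x n ω) + P.degreeNoise n ω) / (n + P.timeOffset) := by
  have hm := P.two_mul_m_pos
  have hn : (0 : ℝ) < n + P.timeOffset := add_pos_of_nonneg_of_pos n.cast_nonneg P.timeOffset_pos
  have hS : (P.S n : ℝ) + 2 * P.m = 2 * P.m * (n + P.timeOffset) := by
    rw [← S_succ_eq_mul_timeOffset, S_succ]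
    push_cast
    ring
  have hnoise : 2 * P.m * (P.poly (P.x n ω) + P.degreeNoise n ω) =
      P.X (n + 1) ω - P.X n ω - 2 * P.m * P.x n ω := by
    rw [degreeNoise, ← add_sub_assoc, mul_sub, mul_add, mul_div_cancel₀ _ hm.ne']
    ring
  have hX := P.x_mul_S n ω
  rw [x, S_succ_eq_mul_timeOffset, div_eq_iff (mul_pos hm hn).ne', add_mul,
    mul_comm (2 * (P.m : ℝ)), ← mul_assoc (_ / _), div_mul_cancel₀ _ hn.ne']
  linear_combination -hX - hnoise + P.x n ω * hS

theorem isRobbinsMonro_x :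
    IsRobbinsMonro P.x P.degreeNoise P.poly P.timeOffset 2 P.F P.μ where
  adapted := P.stronglyMeasurable_x
  noise := by
    rw [degreeNoise_eq_sub_sum]
    exact P.isL2MartingaleDiff_of_forall_mem_stepEvent
      (fun n => by
        simpa only [div_eq_mul_inv] using
          (P.stronglyMeasurable_natCast_sub P.adaptedX n).mul_const _)
      P.degree_sub_div_of_mem_stepEvent P.abs_degreeIncrement_div_le
  noise_bound n := by
    simpa only [degreeNoise_eq_sub_sum, mul_one] using P.ae_abs_sub_le_of_forall_mem_stepEvent n
      (P.degree_sub_div_of_mem_stepEvent n) P.abs_degreeIncrement_div_le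
  recursion n := ae_of_all _ (P.x_succ n)

theorem ae_tendsto_average_nodeNoise :
    ∀ᵐ ω ∂P.μ, Tendsto (fun n : ℕ => (n : ℝ)⁻¹ * ∑ j ∈ Finset.range n, P.nodeNoise j ω)
      atTop (nhds 0) := by
  have hle (o : P.Outcome) : |(o.2.toNat : ℝ)| ≤ 1 := by
    cases o.2 <;> simp
  rw [nodeNoise_eq_sub_sum]
  exact (P.isL2MartingaleDiff_of_forall_mem_stepEvent
    (P.stronglyMeasurable_natCast_sub P.adaptedA) P.node_sub_of_mem_stepEvent
    hle).ae_tendsto_average_zero fun n =>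
      P.ae_abs_sub_le_of_forall_mem_stepEvent n (P.node_sub_of_mem_stepEvent n) hle

theorem A_eq_add_sum (n : ℕ) (ω : Ω) :
    (P.A n ω : ℝ) = P.A0 + (∑ j ∈ Finset.range n, P.nodeNoise j ω
      + ∑ j ∈ Finset.range n, (P.x j ω + 2 * P.poly (P.x j ω))) := by
  rw [← Finset.sum_add_distrib]
  simp only [nodeNoise, sub_add_cancel, Finset.sum_range_sub (fun j => (P.A j ω : ℝ)), P.hA0,
    add_sub_cancel]

theorem tendsto_a_of_tendsto_average {z : ℝ} {ω : Ω}
    (h : Tendsto (fun n : ℕ => (n : ℝ)⁻¹ * P.A n ω) atTop (nhds z)) :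
    Tendsto (fun n => P.a n ω) atTop (nhds z) := by
  have hinv : Tendsto (fun n : ℕ => (n : ℝ)⁻¹) atTop (nhds 0) := tendsto_inv_atTop_nhds_zero_nat
  have hquot := h.div ((hinv.mul_const ((P.A0 : ℝ) + P.B0)).add_const 1) (by simp)
  rw [zero_mul, zero_add, div_one] at hquot
  refine hquot.congr' ?_
  filter_upwards [eventually_ne_atTop 0] with n hn
  have hn' : (n : ℝ) ≠ 0 := Nat.cast_ne_zero.2 hn
  rw [Pi.div_apply, a, ← mul_div_mul_left _ ((P.A0 : ℝ) + P.B0 + n) (inv_ne_zero hn'),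
    mul_add _ _ (n : ℝ), inv_mul_cancel₀ hn']

theorem ae_tendsto_a_of_tendsto_x {z : ℝ} (h0 : P.poly z = 0) :
    ∀ᵐ ω ∂P.μ, Tendsto (fun n => P.x n ω) atTop (nhds z) →
      Tendsto (fun n => P.a n ω) atTop (nhds z) := by
  filter_upwards [P.ae_tendsto_average_nodeNoise] with ω hnoise hx
  have hpoly : Tendsto (fun n => P.poly (P.x n ω)) atTop (nhds 0) :=
    h0 ▸ (P.differentiable_poly.continuous.tendsto z).comp hx
  have hmean : Tendsto (fun n => P.x n ω + 2 * P.poly (P.x n ω)) atTop (nhds z) := by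
    simpa using hx.add (hpoly.const_mul 2)
  have hA0 : Tendsto (fun n : ℕ => (n : ℝ)⁻¹ * P.A0) atTop (nhds 0) := by
    simpa using (tendsto_inv_atTop_nhds_zero_nat (𝕜 := ℝ)).mul_const (P.A0 : ℝ)
  apply P.tendsto_a_of_tendsto_average
  simpa only [A_eq_add_sum, mul_add, zero_add] using hA0.add (hnoise.add hmean.cesaro)

section Reachability

/-- With positive probability `X n = v`, where `v` leaves both colours a positive degree. -/
def IsReachable (n v : ℕ) : Prop :=
  0 < v ∧ v < P.S n ∧ 0 < P.μ.real {ω | P.X n ω = v}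

variable {P}

theorem isReachable_zero (hX0 : 0 < P.X0) (hY0 : 0 < P.Y0) : P.IsReachable 0 P.X0 := by
  refine ⟨hX0, by simpa [S] using hY0, ?_⟩
  simp [P.hX0]

theorem IsReachable.succ {n v : ℕ} (h : P.IsReachable n v) {o : P.Outcome}
    (ho : 0 < P.typeProb o) : P.IsReachable (n + 1) (v + P.degreeIncrement o) := by
  obtain ⟨hv0, hvS, hpos⟩ := h
  have hfrac : (v : ℝ) / P.S n ∈ Ioo (0 : ℝ) 1 := by
    have hS : (0 : ℝ) < P.S n := Nat.cast_pos.2 (hv0.trans hvS)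
    exact ⟨div_pos (Nat.cast_pos.2 hv0) hS, (div_lt_one hS).2 (Nat.cast_lt.2 hvS)⟩
  have hmeas : MeasurableSet[P.F n] {ω | P.X n ω = v} := P.adaptedX n (measurableSet_singleton v)
  have hprob : P.μ.real ({ω | P.X n ω = v} ∩ P.stepEvent n o) =
      P.μ.real {ω | P.X n ω = v} * P.outcomeProb o (v / P.S n) := by
    rw [P.measureReal_inter_stepEvent hmeas, setIntegral_congr_fun (P.F.le n _ hmeas)
      (g := fun _ => P.outcomeProb o (v / P.S n)) fun ω (hω : P.X n ω = v) => by simp only [x, hω],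
      setIntegral_const, smul_eq_mul]
  refine ⟨Nat.add_pos_left hv0 _, ?_, ?_⟩
  · rw [S_succ]
    exact add_lt_add_of_lt_of_le hvS (P.degreeIncrement_le o)
  · have hinter : 0 < P.μ.real ({ω | P.X n ω = v} ∩ P.stepEvent n o) :=
      hprob ▸ mul_pos hpos (mul_pos
        (eval_bernsteinPolynomial_pos (Nat.lt_succ_iff.1 o.1.2) hfrac) ho)
    refine hinter.trans_le (measureReal_mono ?_)
    rintro ω ⟨hX : P.X n ω = v, -, hstep⟩
    exact hstep.trans (by rw [hX])

theorem exists_isReachable_abs_sub_le (hX0 : 0 < P.X0) (hY0 : 0 < P.Y0) {lo hi : P.Outcome}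
    (hlo : 0 < P.typeProb lo) (hhi : 0 < P.typeProb hi) {t : ℝ}
    (hlot : (P.degreeIncrement lo : ℝ) ≤ 2 * P.m * t)
    (hthi : 2 * P.m * t ≤ P.degreeIncrement hi) :
    ∃ K, ∀ n, ∃ v, P.IsReachable n v ∧ |(v : ℝ) - t * P.S n| ≤ K := by
  refine ⟨max |P.X0 - t * P.S 0| (2 * P.m), fun n => ?_⟩
  have hhim : (P.degreeIncrement hi : ℝ) ≤ 2 * P.m := mod_cast P.degreeIncrement_le hi
  have hS (n : ℕ) : (P.S (n + 1) : ℝ) = P.S n + 2 * P.m := mod_cast P.S_succ n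
  have hK : (2 * P.m : ℝ) ≤ max |P.X0 - t * P.S 0| (2 * P.m) := le_max_right _ _
  induction n with
  | zero => exact ⟨P.X0, isReachable_zero hX0 hY0, le_max_left _ _⟩
  | succ n ih =>
    obtain ⟨v, hv, hvK⟩ := ih
    obtain ⟨hvK1, hvK2⟩ := abs_le.1 hvK
    rcases le_total (v : ℝ) (t * P.S n) with hvt | hvt
    · refine ⟨v + P.degreeIncrement hi, hv.succ hhi, abs_le.2 ?_⟩
      rw [hS]
      push_cast
      constructor <;> linarith
    · refine ⟨v + P.degreeIncrement lo, hv.succ hlo, abs_le.2 ?_⟩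
      rw [hS]
      push_cast
      constructor <;> linarith

theorem isFrequentlyNear_x (hX0 : 0 < P.X0) (hY0 : 0 < P.Y0) {lo hi : P.Outcome}
    (hlo : 0 < P.typeProb lo) (hhi : 0 < P.typeProb hi) {t : ℝ}
    (hlot : (P.degreeIncrement lo : ℝ) ≤ 2 * P.m * t)
    (hthi : 2 * P.m * t ≤ P.degreeIncrement hi) : IsFrequentlyNear P.x P.μ t := by
  intro δ hδ
  obtain ⟨K, hK⟩ := exists_isReachable_abs_sub_le hX0 hY0 hlo hhi hlot hthi
  refine Eventually.frequently ?_
  filter_upwards [P.tendsto_S_atTop.eventually_gt_atTop 0,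
    P.tendsto_S_atTop.eventually_gt_atTop (K / δ)] with n hS hKS
  obtain ⟨v, ⟨-, -, hpos⟩, hv⟩ := hK n
  suffices hsub : {ω | P.X n ω = v} ⊆ {ω | |P.x n ω - t| < δ} from
    (ENNReal.toReal_pos_iff.1 hpos).1.trans_le (measure_mono hsub)
  intro ω (hω : P.X n ω = v)
  rw [Set.mem_ofPred_eq, x, hω, div_sub' hS.ne', abs_div, abs_of_pos hS, div_lt_iff₀ hS, mul_comm δ,
    mul_comm _ t]
  exact hv.trans_lt ((div_lt_iff₀ hδ).1 hKS)

theorem exists_degreeIncrement_ne {z : ℝ} (hderiv : deriv P.poly z ≠ -1) :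
    ∃ o, P.typeProb o ≠ 0 ∧ (P.degreeIncrement o : ℝ) ≠ 2 * P.m * z := by
  by_contra! hall
  have hpoly : P.poly = fun y => z - y := by
    ext y
    have hsum := calc 2 * P.m * (y + P.poly y)
        = ∑ o, (P.degreeIncrement o : ℝ) * P.outcomeProb o y :=
          (P.sum_degreeIncrement_mul_outcomeProb y).symm
      _ = ∑ o, 2 * P.m * z * P.outcomeProb o y := by
          refine Finset.sum_congr rfl fun o _ => ?_
          by_cases ho : P.typeProb o = 0
          · rw [outcomeProb, ho, mul_zero, mul_zero, mul_zero]
          · rw [hall o ho]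
      _ = 2 * P.m * z := by rw [← Finset.mul_sum, sum_outcomeProb, mul_one]
    exact eq_sub_of_add_eq' (mul_left_cancel₀ P.two_mul_m_pos.ne' hsum)
  exact hderiv (by rw [hpoly, deriv_const_sub, deriv_id''])

theorem exists_degreeIncrement_lt_and_exists_lt {z : ℝ} (hz : z ∈ Ioo (0 : ℝ) 1)
    (h0 : P.poly z = 0) (hderiv : deriv P.poly z ≠ -1) :
    (∃ o, 0 < P.typeProb o ∧ (P.degreeIncrement o : ℝ) < 2 * P.m * z) ∧
      ∃ o, 0 < P.typeProb o ∧ 2 * P.m * z < P.degreeIncrement o := by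
  have hsum : ∑ o, ((P.degreeIncrement o : ℝ) - 2 * P.m * z) * P.outcomeProb o z = 0 := by
    simp only [sub_mul, Finset.sum_sub_distrib, ← Finset.mul_sum, sum_outcomeProb,
      sum_degreeIncrement_mul_outcomeProb, h0, add_zero, mul_one, sub_self]
  have hbernstein (o : P.Outcome) : 0 < (bernsteinPolynomial ℝ P.m o.1).eval z :=
    eval_bernsteinPolynomial_pos (Nat.lt_succ_iff.1 o.1.2) hz
  have htype {o : P.Outcome} (ho : P.outcomeProb o z ≠ 0) : 0 < P.typeProb o :=
    (P.typeProb_nonneg o).lt_of_ne' (right_ne_zero_of_mul ho)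
  have hprob (o : P.Outcome) : 0 ≤ P.outcomeProb o z :=
    mul_nonneg (hbernstein o).le (P.typeProb_nonneg o)
  obtain ⟨o, ho, hne⟩ := exists_degreeIncrement_ne hderiv
  have hne' := mul_ne_zero (sub_ne_zero.2 hne) (mul_ne_zero (hbernstein o).ne' ho)
  constructor
  · obtain ⟨o', -, ho'⟩ := Finset.exists_pos_of_sum_zero_of_exists_nonzero
      (fun o => -(((P.degreeIncrement o : ℝ) - 2 * P.m * z) * P.outcomeProb o z))
      (by rw [Finset.sum_neg_distrib, hsum, neg_zero]) ⟨o, Finset.mem_univ o, neg_ne_zero.2 hne'⟩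
    have hneg := neg_pos.1 ho'
    exact ⟨o', htype (right_ne_zero_of_mul hneg.ne),
      sub_neg.1 (neg_of_mul_neg_left hneg (hprob o'))⟩
  · obtain ⟨o', -, ho'⟩ := Finset.exists_pos_of_sum_zero_of_exists_nonzero
      _ hsum ⟨o, Finset.mem_univ o, hne'⟩
    exact ⟨o', htype (right_ne_zero_of_mul ho'.ne'),
      sub_pos.1 (pos_of_mul_pos_left ho' (hprob o'))⟩

theorem eventually_isFrequentlyNear_x (hX0 : 0 < P.X0) (hY0 : 0 < P.Y0) {z : ℝ}
    (hz : z ∈ Ioo (0 : ℝ) 1) (h0 : P.poly z = 0) (hderiv : deriv P.poly z ≠ -1) :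
    ∀ᶠ t in nhds z, IsFrequentlyNear P.x P.μ t := by
  obtain ⟨⟨lo, hlo, hloz⟩, ⟨hi, hhi, hzhi⟩⟩ :=
    exists_degreeIncrement_lt_and_exists_lt hz h0 hderiv
  have hcont : Tendsto (fun t : ℝ => 2 * P.m * t) (nhds z) (nhds (2 * P.m * z)) :=
    tendsto_id.const_mul _
  filter_upwards [hcont.eventually_const_lt hloz, hcont.eventually_lt_const hzhi]
    with t hlot hthi
  exact isFrequentlyNear_x hX0 hY0 hlo hhi hlot.le hthi.le

end Reachability

end PAProcess

theorem eventually_nhdsNE_of_forall_mem_Ioo_union {z ε : ℝ} (hε : 0 < ε) {p : ℝ → Prop}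
    (h : ∀ y ∈ Ioo (z - ε) z ∪ Ioo z (z + ε), p y) : ∀ᶠ y in nhdsWithin z {z}ᶜ, p y := by
  rw [← nhdsLT_sup_nhdsGT, eventually_sup]
  exact ⟨mem_of_superset (Ioo_mem_nhdsLT (sub_lt_self z hε)) fun y hy => h y (.inl hy),
    mem_of_superset (Ioo_mem_nhdsGT (lt_add_of_pos_right z hε)) fun y hy => h y (.inr hy)⟩

/-- **Nonlinear models, touchpoints.** In a nonlinear model with `X_0, Y_0 > 0`, if
`z ∈ Z_P ∩ (0,1)` is a touchpoint, i.e. there is `ε > 0` such that `P` is either strictly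
positive or strictly negative on `(z−ε, z) ∪ (z, z+ε)`, then `a_n → z` with positive
probability. -/
theorem nonlinear_model_touchpoint
    {Ω : Type} [MeasurableSpace Ω] (P : PAProcess Ω)
    (hnonlin : ∃ k ≤ P.m, P.p k ≠ (k : ℝ) / P.m)
    (hX0 : 0 < P.X0) (hY0 : 0 < P.Y0)
    (z : ℝ) (hz : z ∈ P.Zp ∩ Set.Ioo (0 : ℝ) 1)
    (ε : ℝ) (hε : 0 < ε)
    (htouch : (∀ y ∈ Set.Ioo (z - ε) z ∪ Set.Ioo z (z + ε), 0 < P.poly y) ∨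
              (∀ y ∈ Set.Ioo (z - ε) z ∪ Set.Ioo z (z + ε), P.poly y < 0)) :
    0 < P.μ {ω | Tendsto (fun n => P.a n ω) atTop (nhds z)} := by
  obtain ⟨⟨-, h0 : P.poly z = 0⟩, hz01⟩ := hz
  have htouch' := htouch.imp (eventually_nhdsNE_of_forall_mem_Ioo_union hε)
    (eventually_nhdsNE_of_forall_mem_Ioo_union hε)
  have hderiv : deriv P.poly z ≠ -1 := by
    rw [deriv_eq_zero_of_touchpoint h0 htouch']
    norm_num
  have hx : 0 < P.μ {ω | Tendsto (fun n => P.x n ω) atTop (nhds z)} :=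
    P.isRobbinsMonro_x.measure_tendsto_pos_of_touchpoint
      P.differentiable_poly.continuous P.differentiable_poly.differentiableAt h0 htouch'
      (PAProcess.eventually_isFrequentlyNear_x hX0 hY0 hz01 h0 hderiv)
  exact hx.trans_le (measure_mono_ae (P.ae_tendsto_a_of_tendsto_x h0))
end
end

section
/- Suppose 0 < α ≤ 1 and p_u^i = α/N + (1−α)·u^i/m for all admissible vectors u and all i ∈ [N], and that X_0^i > 0 for all i ∈ [N]. Then the vector field satisfies P(y) = (α/2)((1/N)·𝟏 − y) for all y ∈ Δ^N, where 𝟏 = (1,…,1), and the process {a_n} converges almost surely to the vector (1/N, …, 1/N). -/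
open MeasureTheory ProbabilityTheory Filter Set

noncomputable section

/-- The vector field `P(y)^i = (1/2) ∑_u (m choose u) y^u (p_u^i − u^i/m)`, where the sum
ranges over all `u : Fin N → ℕ` with `∑ i, u i = m`. -/
def vecFieldP (N m : ℕ) (p : (Fin N → ℕ) → Fin N → ℝ) (y : Fin N → ℝ) : Fin N → ℝ :=
  fun i => (1 / 2) * ∑ u ∈ Finset.Nat.antidiagonalTuple N m,
    (Nat.multinomial Finset.univ u : ℝ) * (∏ j, y j ^ u j) * (p u i - (u i : ℝ) / m)

/-- The zero set `Z_P = {y ∈ Δ^N : P(y) = 0}` of the vector field on the probability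
simplex. -/
def zeroSetVecP (N m : ℕ) (p : (Fin N → ℕ) → Fin N → ℝ) : Set (Fin N → ℝ) :=
  {y ∈ stdSimplex ℝ (Fin N) | vecFieldP N m p y = 0}

/-- The `N`-type preferential attachment process with `m` edges per new node and type
adoption parameters `p u i` (for `u : Fin N → ℕ` with `∑ i, u i = m`), defined on a
probability space `(Ω, μ)` with filtration `F`.  `A n i` is the number of type-`i` nodes and
`X n i` the sum of the degrees of type-`i` nodes at time `n`; the transition given `F n` is:
a vector `u` is drawn from the `Multinomial(m, x_n)` distribution, an index `i` is drawn from
the distribution `p_u`, and then `A_{n+1} = A_n + δ^i`, `X_{n+1} = X_n + u + m δ^i`. -/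
structure NPAProcess (Ω : Type) [MeasurableSpace Ω] where
  μ : Measure Ω
  isProb : IsProbabilityMeasure μ
  N : ℕ
  m : ℕ
  hN : 2 ≤ N
  hm : 1 ≤ m
  p : (Fin N → ℕ) → Fin N → ℝ
  hp_nonneg : ∀ u ∈ Finset.Nat.antidiagonalTuple N m, ∀ i, 0 ≤ p u i
  hp_sum : ∀ u ∈ Finset.Nat.antidiagonalTuple N m, ∑ i, p u i = 1
  A : ℕ → Ω → Fin N → ℕ
  X : ℕ → Ω → Fin N → ℕ
  F : Filtration ℕ ‹MeasurableSpace Ω›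
  A0 : Fin N → ℕ
  X0 : Fin N → ℕ
  hA0 : ∀ ω, A 0 ω = A0
  hX0 : ∀ ω, X 0 ω = X0
  adaptedA : ∀ n, Measurable[F n] (A n)
  adaptedX : ∀ n, Measurable[F n] (X n)
  hXsum : ∀ n ω, ∑ i, X n ω i = ∑ i, X0 i + 2 * m * n
  step : ∀ n : ℕ, ∀ u ∈ Finset.Nat.antidiagonalTuple N m, ∀ i : Fin N,
    μ[Set.indicator
        {ω | (∀ j, A (n + 1) ω j = A n ω j + if j = i then 1 else 0) ∧
             (∀ j, X (n + 1) ω j = X n ω j + u j + if j = i then m else 0)}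
        (fun _ => (1 : ℝ)) | F n]
      =ᵐ[μ] fun ω => (Nat.multinomial Finset.univ u : ℝ) *
        (∏ j, ((X n ω j : ℝ) / ((∑ i', X0 i' : ℕ) + 2 * m * n : ℝ)) ^ u j) * p u i

namespace NPAProcess

variable {Ω : Type} [MeasurableSpace Ω] (P : NPAProcess Ω)

/-- Total degree `S_n = S_0 + 2mn`. -/
def S (n : ℕ) : ℕ := ∑ i, P.X0 i + 2 * P.m * n

/-- Normalized degree vector `x_n = X_n / S_n`. -/
def x (n : ℕ) (ω : Ω) : Fin P.N → ℝ := fun i => (P.X n ω i : ℝ) / (P.S n : ℝ)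

/-- Normalized type-count vector `a_n = A_n / (∑ i, A_0^i + n)`. -/
def a (n : ℕ) (ω : Ω) : Fin P.N → ℝ :=
  fun i => (P.A n ω i : ℝ) / ((∑ i', P.A0 i' : ℕ) + n : ℝ)

/-- The vector field `P` of the process. -/
def vec : (Fin P.N → ℝ) → Fin P.N → ℝ := vecFieldP P.N P.m P.p

/-- The zero set `Z_P` of the process. -/
def Zp : Set (Fin P.N → ℝ) := zeroSetVecP P.N P.m P.p

end NPAProcess

/-!
Normalized counts `y n = Y n / (B + n)` of a process whose increments have conditional mean
`y n + κ * (θ n - y n)` satisfy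
`y (n + 1) = y n + κ / (n + 1 + B) * (θ n - y n) + noise`.
The noise is the increment of an `L²`-bounded martingale, so its partial sums converge almost
surely, and the step sizes have infinite sum, so `y n` follows every convergent
target `θ n` to its limit.

In the mixture model a multinomial sample from `y` has mean `m * y`, so the next type has law
`y + α * (π - y)`. The normalized degrees are therefore driven towards the constant target `π`
with `κ = α / 2`. The type counts have `κ = 1` and the law of the next type as target, and this
law converges to `π` once the degrees do.
-/

open scoped Topology

section Recursion

variable {a b s v w : ℕ → ℝ} {ℓ : ℝ}

lemma tendsto_zero_of_le_one_sub_mul (hv0 : ∀ n, 0 ≤ v n)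
    (ha : Tendsto (fun n => ∑ k ∈ Finset.range n, a k) atTop atTop)
    (hv : ∀ᶠ n in atTop, v (n + 1) ≤ (1 - a n) * v n) : Tendsto v atTop (𝓝 0) := by
  obtain ⟨n₀, hn₀⟩ := eventually_atTop.1 hv
  have hstep : ∀ n ≥ n₀, v (n + 1) ≤ Real.exp (-a n) * v n + 0 := fun n hn => by
    rw [add_zero]
    exact (hn₀ n hn).trans (mul_le_mul_of_nonneg_right (Real.one_sub_le_exp_neg _) (hv0 n))
  have hbound : ∀ n ≥ n₀, v n ≤ v n₀ * Real.exp (-∑ k ∈ Finset.Ico n₀ n, a k) := fun n hn => by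
    simpa only [zero_mul, Finset.sum_const_zero, add_zero, ← Real.exp_sum, Finset.sum_neg_distrib]
      using discrete_gronwall_prod_general hstep (fun _ _ => (Real.exp_pos _).le) hn
  have htail : Tendsto (fun n => ∑ k ∈ Finset.Ico n₀ n, a k) atTop atTop :=
    (tendsto_atTop_add_const_right _ (-∑ k ∈ Finset.range n₀, a k) ha).congr'
      ((eventually_ge_atTop n₀).mono fun n hn => by
        simp only [Finset.sum_Ico_eq_sub _ hn, sub_eq_add_neg])
  have hlim : Tendsto (fun n => v n₀ * Real.exp (-∑ k ∈ Finset.Ico n₀ n, a k)) atTop (𝓝 0) := by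
    simpa only [mul_zero, Function.comp_def] using
      (Real.tendsto_exp_neg_atTop_nhds_zero.comp htail).const_mul (v n₀)
  exact squeeze_zero' (.of_forall hv0) ((eventually_ge_atTop n₀).mono hbound) hlim

lemma tendsto_zero_of_eq_one_sub_mul_add_mul (ha01 : ∀ᶠ n in atTop, a n ∈ Icc (0 : ℝ) 1)
    (ha : Tendsto (fun n => ∑ k ∈ Finset.range n, a k) atTop atTop)
    (hs : Tendsto s atTop (𝓝 0))
    (hw : ∀ᶠ n in atTop, w (n + 1) = (1 - a n) * w n + a n * s n) :
    Tendsto w atTop (𝓝 0) := by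
  have hexcess : ∀ ε > 0, Tendsto (fun n => max (|w n| - ε) 0) atTop (𝓝 0) := by
    intro ε hε
    refine tendsto_zero_of_le_one_sub_mul (fun n => le_max_right _ _) ha ?_
    filter_upwards [ha01, hw, hs.abs.eventually_le_const (by simpa only [abs_zero] using hε)]
      with n ⟨ha0, ha1⟩ hwn hsn
    have ha1' : 0 ≤ 1 - a n := sub_nonneg.2 ha1
    have habs : |w (n + 1)| ≤ (1 - a n) * |w n| + a n * ε := calc
      |w (n + 1)| ≤ |(1 - a n) * w n| + |a n * s n| := hwn ▸ abs_add_le _ _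
      _ = (1 - a n) * |w n| + a n * |s n| := by
        rw [abs_mul, abs_mul, abs_of_nonneg ha0, abs_of_nonneg ha1']
      _ ≤ (1 - a n) * |w n| + a n * ε := by gcongr
    refine max_le ?_ (mul_nonneg ha1' (le_max_right _ _))
    calc |w (n + 1)| - ε ≤ (1 - a n) * (|w n| - ε) := by linarith
      _ ≤ (1 - a n) * max (|w n| - ε) 0 := by gcongr; exact le_max_left _ _
  rw [Metric.tendsto_nhds]
  intro ε hε
  filter_upwards [(hexcess (ε / 2) (half_pos hε)).eventually_lt_const (half_pos hε)] with n hn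
  rw [Real.dist_0_eq_abs]
  linarith [le_max_left (|w n| - ε / 2) 0]

lemma tendsto_of_relaxation_add_noise (ha01 : ∀ᶠ n in atTop, a n ∈ Icc (0 : ℝ) 1)
    (ha : Tendsto (fun n => ∑ k ∈ Finset.range n, a k) atTop atTop)
    (hs : Tendsto s atTop (𝓝 ℓ))
    (hb : ∃ l, Tendsto (fun n => ∑ k ∈ Finset.range n, b k) atTop (𝓝 l))
    (hw : ∀ᶠ n in atTop, w (n + 1) = w n + a n * (s n - w n) + b n) :
    Tendsto w atTop (𝓝 ℓ) := by
  obtain ⟨l, hl⟩ := hb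
  -- Adding the tail `l - ∑ k < n, b k` of the noise to `w` absorbs it into the driving term.
  have htail : Tendsto (fun n => l - ∑ k ∈ Finset.range n, b k) atTop (𝓝 0) := by
    simpa only [sub_self] using hl.const_sub l
  have hsub : Tendsto (fun n => w n - ℓ + (l - ∑ k ∈ Finset.range n, b k)) atTop (𝓝 0) := by
    refine tendsto_zero_of_eq_one_sub_mul_add_mul (a := a)
      (s := fun n => s n - ℓ + (l - ∑ k ∈ Finset.range n, b k)) ha01 ha ?_ ?_
    · simpa only [sub_self, add_zero] using (hs.sub_const ℓ).add htail
    · filter_upwards [hw] with n hn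
      rw [hn, Finset.sum_range_succ]
      ring
  simpa only [add_sub_cancel_right, sub_add_cancel, sub_zero, zero_add]
    using (hsub.sub htail).add_const ℓ

end Recursion

section StepSizes

lemma tendsto_sum_range_const_div_add_atTop {κ B : ℝ} (hκ : 0 < κ) (hB : 0 ≤ B) :
    Tendsto (fun n => ∑ k ∈ Finset.range n, κ / (k + B)) atTop atTop := by
  refine (not_summable_iff_tendsto_nat_atTop_of_nonneg fun k => by positivity).1 fun hsum => ?_
  refine lt_irrefl (1 : ℝ) ((Real.summable_one_div_nat_add_rpow B 1).1 ?_)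
  refine (hsum.div_const κ).congr fun k => ?_
  rw [Real.rpow_one, abs_of_nonneg (by positivity), div_div_cancel_left' hκ.ne', one_div]

lemma summable_sq_const_div_add (κ B : ℝ) : Summable fun k : ℕ => (κ / (k + B)) ^ 2 := by
  refine (((Real.summable_one_div_nat_add_rpow B 2).2 one_lt_two).mul_left (κ ^ 2)).congr
    fun k => ?_
  rw [Real.rpow_two, sq_abs, mul_one_div, div_pow]

lemma eventually_const_div_add_mem_Icc {κ : ℝ} (B : ℝ) (hκ : 0 ≤ κ) :
    ∀ᶠ k : ℕ in atTop, κ / (k + B) ∈ Icc (0 : ℝ) 1 := by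
  have hlim : Tendsto (fun k : ℕ => (k : ℝ) + B) atTop atTop :=
    tendsto_atTop_add_const_right _ B tendsto_natCast_atTop_atTop
  filter_upwards [hlim.eventually_gt_atTop 0, hlim.eventually_ge_atTop κ] with k hpos hle
  exact ⟨div_nonneg hκ hpos.le, (div_le_one hpos).2 hle⟩

end StepSizes

section MartingaleDifferences

variable {Ω : Type*} {mΩ : MeasurableSpace Ω} {μ : Measure Ω} [IsFiniteMeasure μ]
  {ℱ : Filtration ℕ mΩ} {ξ Z : ℕ → Ω → ℝ}

lemma integral_mul_eq_zero_of_condExp_eq_zero {m : MeasurableSpace Ω} (hm : m ≤ mΩ) {f g : Ω → ℝ}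
    (hf : StronglyMeasurable[m] f) (hf2 : MemLp f 2 μ) (hg2 : MemLp g 2 μ)
    (hg : μ[g | m] =ᵐ[μ] 0) : ∫ ω, f ω * g ω ∂μ = 0 := by
  have hfg : Integrable (f * g) μ := hf2.integrable_mul hg2
  have hpull : μ[f * g | m] =ᵐ[μ] 0 := by
    filter_upwards [condExp_mul_of_stronglyMeasurable_left hf hfg (hg2.integrable one_le_two), hg]
      with ω hω hgω
    rw [hω, Pi.mul_apply, hgω, Pi.zero_apply, mul_zero]
  calc ∫ ω, f ω * g ω ∂μ = ∫ ω, (μ[f * g | m]) ω ∂μ := (integral_condExp hm).symm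
    _ = 0 := integral_eq_zero_of_ae hpull

lemma stronglyMeasurable_sum_range (hadp : ∀ n, StronglyMeasurable[ℱ (n + 1)] (ξ n)) (n : ℕ) :
    StronglyMeasurable[ℱ n] fun ω => ∑ k ∈ Finset.range n, ξ k ω :=
  Finset.stronglyMeasurable_fun_sum _ fun k hk =>
    (hadp k).mono (ℱ.mono (Finset.mem_range.1 hk))

lemma integral_sq_sum_range_of_condExp_eq_zero
    (hadp : ∀ n, StronglyMeasurable[ℱ (n + 1)] (ξ n)) (hL2 : ∀ n, MemLp (ξ n) 2 μ)
    (hξ : ∀ n, μ[ξ n | ℱ n] =ᵐ[μ] 0) (n : ℕ) :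
    ∫ ω, (∑ k ∈ Finset.range n, ξ k ω) ^ 2 ∂μ = ∑ k ∈ Finset.range n, ∫ ω, ξ k ω ^ 2 ∂μ := by
  induction n with
  | zero => simp
  | succ n ih =>
    have hM : MemLp (fun ω => ∑ k ∈ Finset.range n, ξ k ω) 2 μ :=
      memLp_finsetSum _ fun k _ => hL2 k
    have hM2 : Integrable (fun ω => (∑ k ∈ Finset.range n, ξ k ω) ^ 2) μ := hM.integrable_sq
    have hcross : Integrable (fun ω => 2 * ((∑ k ∈ Finset.range n, ξ k ω) * ξ n ω)) μ :=
      (hM.integrable_mul (hL2 n)).const_mul 2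
    have horth : ∫ ω, (∑ k ∈ Finset.range n, ξ k ω) * ξ n ω ∂μ = 0 :=
      integral_mul_eq_zero_of_condExp_eq_zero (ℱ.le n) (stronglyMeasurable_sum_range hadp n)
        hM (hL2 n) (hξ n)
    simp only [Finset.sum_range_succ, add_sq, mul_assoc]
    rw [integral_add (f := fun ω => _ + _) (hM2.add hcross) (hL2 n).integrable_sq,
      integral_add hM2 hcross, integral_const_mul, horth, ih, mul_zero, add_zero]

lemma martingale_sum_range_of_condExp_eq_zero
    (hadp : ∀ n, StronglyMeasurable[ℱ (n + 1)] (ξ n)) (hint : ∀ n, Integrable (ξ n) μ)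
    (hξ : ∀ n, μ[ξ n | ℱ n] =ᵐ[μ] 0) :
    Martingale (fun n ω => ∑ k ∈ Finset.range n, ξ k ω) ℱ μ := by
  refine martingale_of_condExp_sub_eq_zero_nat (stronglyMeasurable_sum_range hadp)
    (fun n => integrable_finsetSum _ fun k _ => hint k) fun n => ?_
  have hincr : ((fun ω => ∑ k ∈ Finset.range (n + 1), ξ k ω) -
      fun ω => ∑ k ∈ Finset.range n, ξ k ω) = ξ n := by
    ext ω
    rw [Pi.sub_apply, Finset.sum_range_succ, add_sub_cancel_left]
  rw [hincr]
  exact hξ n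

lemma eLpNorm_one_le_of_integral_sq_le {f : Ω → ℝ} {K : ℝ} (hf : MemLp f 2 μ)
    (hK : ∫ ω, f ω ^ 2 ∂μ ≤ K) : eLpNorm f 1 μ ≤ (K + μ.real univ).toNNReal := by
  have hint : Integrable f μ := hf.integrable one_le_two
  rw [eLpNorm_one_eq_lintegral_enorm, ← ofReal_integral_norm_eq_lintegral_enorm hint]
  refine ENNReal.ofReal_le_ofReal ?_
  calc ∫ ω, ‖f ω‖ ∂μ ≤ ∫ ω, (f ω ^ 2 + 1) ∂μ :=
        integral_mono hint.norm (hf.integrable_sq.add (integrable_const 1)) fun ω => by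
          rw [Real.norm_eq_abs]
          nlinarith [sq_abs (f ω), sq_nonneg (|f ω| - 1), abs_nonneg (f ω)]
    _ = ∫ ω, f ω ^ 2 ∂μ + μ.real univ := by
        rw [integral_add hf.integrable_sq (integrable_const 1), integral_const, smul_eq_mul,
          mul_one]
    _ ≤ K + μ.real univ := by gcongr

lemma ae_exists_tendsto_sum_range_of_condExp_eq_zero
    (hadp : ∀ n, StronglyMeasurable[ℱ (n + 1)] (ξ n)) (hL2 : ∀ n, MemLp (ξ n) 2 μ)
    (hξ : ∀ n, μ[ξ n | ℱ n] =ᵐ[μ] 0) (hsum : Summable fun n => ∫ ω, ξ n ω ^ 2 ∂μ) :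
    ∀ᵐ ω ∂μ, ∃ l, Tendsto (fun n => ∑ k ∈ Finset.range n, ξ k ω) atTop (𝓝 l) := by
  have hmart : Martingale (fun n ω => ∑ k ∈ Finset.range n, ξ k ω) ℱ μ :=
    martingale_sum_range_of_condExp_eq_zero hadp (fun n => (hL2 n).integrable one_le_two) hξ
  have hbdd : ∀ n, ∫ ω, (∑ k ∈ Finset.range n, ξ k ω) ^ 2 ∂μ ≤ ∑' k, ∫ ω, ξ k ω ^ 2 ∂μ :=
    fun n => (integral_sq_sum_range_of_condExp_eq_zero hadp hL2 hξ n).trans_le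
      (hsum.sum_le_tsum _ fun k _ => integral_nonneg fun ω => sq_nonneg _)
  exact hmart.submartingale.exists_ae_tendsto_of_bdd fun n =>
    eLpNorm_one_le_of_integral_sq_le (memLp_finsetSum _ fun k _ => hL2 k) (hbdd n)

lemma ae_exists_tendsto_sum_range_mul_sub_condExp {c : ℕ → ℝ} {R : ℝ}
    (hZ : ∀ n, StronglyMeasurable[ℱ (n + 1)] (Z n)) (hR : ∀ n, ∀ᵐ ω ∂μ, |Z n ω| ≤ R)
    (hc : Summable fun n => c n ^ 2) :
    ∀ᵐ ω ∂μ, ∃ l, Tendsto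
      (fun n => ∑ k ∈ Finset.range n, c k * (Z k ω - (μ[Z k | ℱ k]) ω)) atTop (𝓝 l) := by
  set ξ : ℕ → Ω → ℝ := fun n ω => c n * (Z n ω - (μ[Z n | ℱ n]) ω) with hξ_def
  have hZint : ∀ n, Integrable (Z n) μ := fun n =>
    .of_bound ((hZ n).mono (ℱ.le _)).aestronglyMeasurable R (hR n)
  have hadp : ∀ n, StronglyMeasurable[ℱ (n + 1)] (ξ n) := fun n =>
    ((hZ n).sub (stronglyMeasurable_condExp.mono (ℱ.mono n.le_succ))).const_mul _
  have hbdd : ∀ n, ∀ᵐ ω ∂μ, |ξ n ω| ≤ |c n| * (2 * R) := fun n => by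
    filter_upwards [hR n, ae_bdd_abs_condExp_of_ae_bdd_abs (m := ℱ n) (hR n)] with ω h₁ h₂
    rw [hξ_def, abs_mul, two_mul]
    gcongr
    exact (abs_sub _ _).trans (add_le_add h₁ h₂)
  have hL2 : ∀ n, MemLp (ξ n) 2 μ := fun n =>
    .of_bound ((hadp n).mono (ℱ.le _)).aestronglyMeasurable _ (hbdd n)
  have hξ : ∀ n, μ[ξ n | ℱ n] =ᵐ[μ] 0 := fun n => by
    filter_upwards [condExp_smul (μ := μ) (c n) (Z n - μ[Z n | ℱ n]) (ℱ n),
      condExp_sub (hZint n) integrable_condExp (ℱ n)] with ω h₁ h₂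
    refine h₁.trans ?_
    rw [Pi.smul_apply, h₂, Pi.sub_apply, condExp_of_stronglyMeasurable (ℱ.le n)
      stronglyMeasurable_condExp integrable_condExp, sub_self, smul_zero, Pi.zero_apply]
  refine ae_exists_tendsto_sum_range_of_condExp_eq_zero hadp hL2 hξ
    (.of_nonneg_of_le (fun n => integral_nonneg fun ω => sq_nonneg _) (fun n => ?_)
      (hc.mul_right ((2 * R) ^ 2 * μ.real univ)))
  calc ∫ ω, ξ n ω ^ 2 ∂μ ≤ ∫ _, (|c n| * (2 * R)) ^ 2 ∂μ :=
        integral_mono_ae (hL2 n).integrable_sq (integrable_const _)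
          ((hbdd n).mono fun ω hω => sq_le_sq' (abs_le.1 hω).1 (abs_le.1 hω).2)
    _ = c n ^ 2 * ((2 * R) ^ 2 * μ.real univ) := by
        rw [integral_const, smul_eq_mul, mul_pow, sq_abs]
        ring

lemma ae_tendsto_div_add_of_condExp_increment {Y θ : ℕ → Ω → ℝ} {ℓ : Ω → ℝ} {B κ : ℝ} {R : ℝ}
    (hκ : 0 < κ) (hB : 0 ≤ B) (hY : StronglyAdapted ℱ Y)
    (hR : ∀ n, ∀ᵐ ω ∂μ, |Y (n + 1) ω - Y n ω| ≤ R)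
    (hdrift : ∀ n, μ[Y (n + 1) - Y n | ℱ n] =ᵐ[μ]
      fun ω => Y n ω / (B + n) + κ * (θ n ω - Y n ω / (B + n)))
    (hθ : ∀ᵐ ω ∂μ, Tendsto (fun n => θ n ω) atTop (𝓝 (ℓ ω))) :
    ∀ᵐ ω ∂μ, Tendsto (fun n => Y n ω / (B + n)) atTop (𝓝 (ℓ ω)) := by
  have hnoise := ae_exists_tendsto_sum_range_mul_sub_condExp
    (Z := fun n => Y (n + 1) - Y n) (fun n => (hY (n + 1)).sub ((hY n).mono (ℱ.mono n.le_succ))) hR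
    (summable_sq_const_div_add 1 (B + 1))
  filter_upwards [hnoise, ae_all_iff.2 hdrift, hθ] with ω hnoiseω hdriftω hθω
  -- `y n = Y n / (B + n)` satisfies `y (n + 1) = y n + κ / (n + (B + 1)) * (θ n - y n) + noise`.
  refine tendsto_of_relaxation_add_noise (eventually_const_div_add_mem_Icc (B + 1) hκ.le)
    (tendsto_sum_range_const_div_add_atTop hκ (by positivity : 0 ≤ B + 1)) hθω hnoiseω ?_
  filter_upwards [eventually_gt_atTop 0] with n hn
  rw [hdriftω n, Pi.sub_apply]
  have hn' : (0 : ℝ) < n := Nat.cast_pos.2 hn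
  have hpos : B + n ≠ 0 := (add_pos_of_nonneg_of_pos hB hn').ne'
  have hpos' : n + (B + 1) ≠ 0 := by positivity
  push_cast
  rw [show B + (n + 1) = n + (B + 1) by ring]
  field_simp
  ring

end MartingaleDifferences

section Multinomial

variable {ι R : Type*} [Fintype ι] [CommSemiring R]

/-- The multinomial weight `(m choose u) y^u`, where `m = ∑ j, u j`. -/
def multinomialWeight (y : ι → R) (u : ι → ℕ) : R :=
  Nat.multinomial Finset.univ u * ∏ j, y j ^ u j

lemma sum_piAntidiag_multinomialWeight [DecidableEq ι] (y : ι → R) (m : ℕ) :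
    ∑ u ∈ Finset.univ.piAntidiag m, multinomialWeight y u = (∑ j, y j) ^ m :=
  (Finset.sum_pow_eq_sum_piAntidiag _ y m).symm

lemma sum_piAntidiag_multinomialWeight_mul_apply [DecidableEq ι] (y : ι → R) (m : ℕ) (i : ι) :
    ∑ u ∈ Finset.univ.piAntidiag m,
      multinomialWeight y u * u i = m * (∑ j, y j) ^ (m - 1) * y i := by
  -- Apply the operator `X i * ∂/∂X i` to the multinomial expansion of `(∑ j, X j) ^ m`.
  have hexp : (∑ j, MvPolynomial.X j : MvPolynomial ι R) ^ m =
      ∑ u ∈ Finset.univ.piAntidiag m, MvPolynomial.monomial (Finsupp.equivFunOnFinite.symm u)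
        (Nat.multinomial Finset.univ u : R) := by
    rw [Finset.sum_pow_eq_sum_piAntidiag]
    refine Finset.sum_congr rfl fun u _ => ?_
    rw [MvPolynomial.monomial_eq, Finsupp.prod_fintype _ _ fun _ => pow_zero _, map_natCast]
    rfl
  have hEuler := congrArg
    (fun q => MvPolynomial.eval y (MvPolynomial.X i * MvPolynomial.pderiv i q)) hexp
  simp only [map_sum, Finset.mul_sum, MvPolynomial.X_mul_pderiv_monomial] at hEuler
  simpa [multinomialWeight, MvPolynomial.eval_monomial, Finsupp.prod_fintype,
    Derivation.leibniz_pow, MvPolynomial.pderiv_X, Pi.single_apply, mul_comm, mul_left_comm]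
    using hEuler.symm

end Multinomial

namespace NPAProcess

variable {Ω : Type} [MeasurableSpace Ω] (P : NPAProcess Ω)

/-- The admissible draws `(u, i)`: degree vectors `u` with `∑ j, u j = m`, paired with a type. -/
def draws : Finset ((Fin P.N → ℕ) × Fin P.N) :=
  Finset.Nat.antidiagonalTuple P.N P.m ×ˢ Finset.univ

/-- The probability of the draw `(u, i)` when `u ~ Multinomial(m, y)` and `i ~ p_u`. -/
def drawProb (y : Fin P.N → ℝ) (t : (Fin P.N → ℕ) × Fin P.N) : ℝ :=
  multinomialWeight y t.1 * P.p t.1 t.2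

/-- The mean of `v (u, i)` over the draws `(u, i)` from normalized degrees `y`. -/
def drawMean (v : (Fin P.N → ℕ) × Fin P.N → ℝ) (y : Fin P.N → ℝ) : ℝ :=
  ∑ t ∈ P.draws, P.drawProb y t * v t

/-- The probability that the next node adopts type `i` when the normalized degrees are `y`. -/
def typeProb (y : Fin P.N → ℝ) (i : Fin P.N) : ℝ :=
  ∑ u ∈ Finset.Nat.antidiagonalTuple P.N P.m, multinomialWeight y u * P.p u i

/-- The event that the draw `t = (u, i)` produces the state at time `n + 1`. -/
def drawEvent (n : ℕ) (t : (Fin P.N → ℕ) × Fin P.N) : Set Ω :=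
  {ω | (∀ j, P.A (n + 1) ω j = P.A n ω j + if j = t.2 then 1 else 0) ∧
    (∀ j, P.X (n + 1) ω j = P.X n ω j + t.1 j + if j = t.2 then P.m else 0)}

section Draws

variable {P} {y : Fin P.N → ℝ}

lemma sum_multinomialWeight (hy : ∑ j, y j = 1) :
    ∑ u ∈ Finset.Nat.antidiagonalTuple P.N P.m, multinomialWeight y u = 1 := by
  rw [← Finset.piAntidiag_univ_fin_eq_antidiagonalTuple, sum_piAntidiag_multinomialWeight, hy,
    one_pow]

lemma sum_multinomialWeight_mul_apply (hy : ∑ j, y j = 1) (i : Fin P.N) :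
    ∑ u ∈ Finset.Nat.antidiagonalTuple P.N P.m, multinomialWeight y u * u i = P.m * y i := by
  rw [← Finset.piAntidiag_univ_fin_eq_antidiagonalTuple,
    sum_piAntidiag_multinomialWeight_mul_apply, hy, one_pow, mul_one]

lemma drawMean_of_degrees (f : (Fin P.N → ℕ) → ℝ) (y : Fin P.N → ℝ) :
    P.drawMean (fun t => f t.1) y =
      ∑ u ∈ Finset.Nat.antidiagonalTuple P.N P.m, multinomialWeight y u * f u := by
  rw [drawMean, draws, Finset.sum_product]
  refine Finset.sum_congr rfl fun u hu => ?_
  simp only [drawProb]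
  rw [← Finset.sum_mul, ← Finset.mul_sum, P.hp_sum u hu, mul_one]

lemma drawMean_one (hy : ∑ j, y j = 1) : P.drawMean (fun _ => 1) y = 1 := by
  simpa only [mul_one, sum_multinomialWeight hy] using drawMean_of_degrees (fun _ => 1) y

lemma drawMean_degree (hy : ∑ j, y j = 1) (i : Fin P.N) :
    P.drawMean (fun t => t.1 i) y = P.m * y i := by
  rw [drawMean_of_degrees fun u => (u i : ℝ), sum_multinomialWeight_mul_apply hy]

lemma drawMean_type (y : Fin P.N → ℝ) (i : Fin P.N) :
    P.drawMean (fun t => if i = t.2 then 1 else 0) y = P.typeProb y i := by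
  simp only [drawMean, draws, drawProb, typeProb, Finset.sum_product, mul_ite, mul_one, mul_zero,
    Finset.sum_ite_eq, Finset.mem_univ, if_true]

lemma vec_eq_typeProb_sub (hy : ∑ j, y j = 1) (i : Fin P.N) :
    P.vec y i = 1 / 2 * (P.typeProb y i - y i) := by
  have hm : (P.m : ℝ) ≠ 0 := Nat.cast_ne_zero.2 (Nat.one_le_iff_ne_zero.1 P.hm)
  have hmean : ∑ u ∈ Finset.Nat.antidiagonalTuple P.N P.m,
      multinomialWeight y u * ((u i : ℝ) / P.m) = y i := by
    simp only [← mul_div_assoc]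
    rw [← Finset.sum_div, sum_multinomialWeight_mul_apply hy, mul_div_cancel_left₀ _ hm]
  rw [typeProb, ← hmean, ← Finset.sum_sub_distrib]
  simp only [← mul_sub]
  rfl

lemma typeProb_of_mixture {α : ℝ} {π : Fin P.N → ℝ}
    (hp : ∀ u ∈ Finset.Nat.antidiagonalTuple P.N P.m, ∀ i,
      P.p u i = α * π i + (1 - α) * (u i : ℝ) / P.m)
    (hy : ∑ j, y j = 1) (i : Fin P.N) :
    P.typeProb y i = y i + α * (π i - y i) := by
  have hm : (P.m : ℝ) ≠ 0 := Nat.cast_ne_zero.2 (Nat.one_le_iff_ne_zero.1 P.hm)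
  calc P.typeProb y i = ∑ u ∈ Finset.Nat.antidiagonalTuple P.N P.m,
        (multinomialWeight y u * (α * π i) + multinomialWeight y u * u i * ((1 - α) / P.m)) :=
        Finset.sum_congr rfl fun u hu => by rw [hp u hu]; ring
    _ = α * π i + P.m * y i * ((1 - α) / P.m) := by
        rw [Finset.sum_add_distrib, ← Finset.sum_mul, ← Finset.sum_mul,
          sum_multinomialWeight hy, sum_multinomialWeight_mul_apply hy, one_mul]
    _ = y i + α * (π i - y i) := by field_simp; ring

end Draws

section Transitions

lemma cast_S (n : ℕ) : (P.S n : ℝ) = (∑ i, P.X0 i : ℕ) + 2 * P.m * n := by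
  rw [S]
  push_cast
  rfl

lemma sum_x (hS : 0 < ∑ i, P.X0 i) (n : ℕ) (ω : Ω) : ∑ j, P.x n ω j = 1 := by
  have hSn : (P.S n : ℝ) ≠ 0 := Nat.cast_ne_zero.2 (Nat.add_pos_left hS _).ne'
  simp only [x]
  rw [← Finset.sum_div, ← Nat.cast_sum, P.hXsum, ← S, div_self hSn]

lemma measurableSet_drawEvent (n : ℕ) (t : (Fin P.N → ℕ) × Fin P.N) :
    MeasurableSet[P.F (n + 1)] (P.drawEvent n t) := by
  have hA (k) (hk : k ≤ n + 1) (j) : Measurable[P.F (n + 1)] fun ω => P.A k ω j :=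
    (measurable_pi_apply j).comp ((P.adaptedA k).mono (P.F.mono hk) le_rfl)
  have hX (k) (hk : k ≤ n + 1) (j) : Measurable[P.F (n + 1)] fun ω => P.X k ω j :=
    (measurable_pi_apply j).comp ((P.adaptedX k).mono (P.F.mono hk) le_rfl)
  rw [drawEvent, Set.ofPred_and, Set.ofPred_forall, Set.ofPred_forall]
  exact .inter
    (.iInter fun j => measurableSet_eq_fun (hA _ le_rfl j) ((hA n n.le_succ j).add_const _))
    (.iInter fun j => measurableSet_eq_fun (hX _ le_rfl j)
      (((hX n n.le_succ j).add_const _).add_const _))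

lemma eq_of_mem_drawEvent {n : ℕ} {s t : (Fin P.N → ℕ) × Fin P.N} {ω : Ω}
    (hs : ω ∈ P.drawEvent n s) (ht : ω ∈ P.drawEvent n t) : s = t := by
  obtain ⟨hsA, hsX⟩ := hs
  obtain ⟨htA, htX⟩ := ht
  have htype : s.2 = t.2 := by
    by_contra hne
    simpa [hne] using (hsA s.2).symm.trans (htA s.2)
  refine Prod.ext (funext fun j => ?_) htype
  have hdegree := (hsX j).symm.trans (htX j)
  rw [htype] at hdegree
  omega

lemma condExp_indicator_drawEvent (n : ℕ) {t : (Fin P.N → ℕ) × Fin P.N} (ht : t ∈ P.draws) :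
    P.μ[(P.drawEvent n t).indicator (fun _ => (1 : ℝ)) | P.F n] =ᵐ[P.μ]
      fun ω => P.drawProb (P.x n ω) t := by
  simpa only [drawProb, multinomialWeight, drawEvent, x, cast_S] using
    P.step n t.1 (Finset.mem_product.1 ht).1 t.2

lemma sum_indicator_drawEvent_mul {n : ℕ} {t : (Fin P.N → ℕ) × Fin P.N} {ω : Ω}
    (ht : t ∈ P.draws) (hω : ω ∈ P.drawEvent n t) (v : (Fin P.N → ℕ) × Fin P.N → ℝ) :
    ∑ s ∈ P.draws, v s * (P.drawEvent n s).indicator (fun _ => (1 : ℝ)) ω = v t := by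
  rw [Finset.sum_eq_single_of_mem t ht fun s _ hne => ?_, indicator_of_mem hω, mul_one]
  rw [indicator_of_notMem fun hs => hne (P.eq_of_mem_drawEvent hs hω), mul_zero]

lemma condExp_sum_indicator_drawEvent (n : ℕ) (v : (Fin P.N → ℕ) × Fin P.N → ℝ) :
    P.μ[fun ω => ∑ t ∈ P.draws, v t * (P.drawEvent n t).indicator (fun _ => (1 : ℝ)) ω | P.F n]
      =ᵐ[P.μ] fun ω => P.drawMean v (P.x n ω) := by
  have := P.isProb
  have hint (t) : Integrable ((P.drawEvent n t).indicator fun _ => (1 : ℝ)) P.μ :=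
    (integrable_const 1).indicator (P.F.le _ _ (P.measurableSet_drawEvent n t))
  have hsum : (fun ω => ∑ t ∈ P.draws, v t * (P.drawEvent n t).indicator (fun _ => (1 : ℝ)) ω) =
      ∑ t ∈ P.draws, v t • (P.drawEvent n t).indicator fun _ => (1 : ℝ) := by
    ext ω
    simp only [Finset.sum_apply, Pi.smul_apply, smul_eq_mul]
  have hterm : ∀ᵐ ω ∂P.μ, ∀ t ∈ P.draws,
      (P.μ[v t • (P.drawEvent n t).indicator (fun _ => (1 : ℝ)) | P.F n]) ω =
        P.drawProb (P.x n ω) t * v t := by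
    refine (Finset.eventually_all P.draws).2 fun t ht => ?_
    filter_upwards [condExp_smul (μ := P.μ) (v t)
      ((P.drawEvent n t).indicator fun _ => (1 : ℝ)) (P.F n),
      P.condExp_indicator_drawEvent n ht] with ω hsmul hprob
    rw [hsmul, Pi.smul_apply, hprob, smul_eq_mul, mul_comm]
  rw [hsum]
  filter_upwards [condExp_finsetSum (fun t _ => (hint t).smul (v t)) (P.F n), hterm]
    with ω hlin hω
  rw [hlin, Finset.sum_apply, drawMean, Finset.sum_congr rfl hω]

lemma ae_exists_mem_drawEvent (hS : 0 < ∑ i, P.X0 i) (n : ℕ) :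
    ∀ᵐ ω ∂P.μ, ∃ t ∈ P.draws, ω ∈ P.drawEvent n t := by
  have := P.isProb
  have hmeas (t) : MeasurableSet (P.drawEvent n t) :=
    P.F.le _ _ (P.measurableSet_drawEvent n t)
  have hdisj : PairwiseDisjoint (P.draws : Set ((Fin P.N → ℕ) × Fin P.N)) (P.drawEvent n) :=
    fun s _ t _ hne => disjoint_left.2 fun _ hs ht => hne (P.eq_of_mem_drawEvent hs ht)
  have hunion : P.μ.real (⋃ t ∈ P.draws, P.drawEvent n t) = 1 := calc
    P.μ.real (⋃ t ∈ P.draws, P.drawEvent n t) = ∑ t ∈ P.draws, P.μ.real (P.drawEvent n t) :=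
      measureReal_biUnion_finset hdisj fun t _ => hmeas t
    _ = ∫ ω, ∑ t ∈ P.draws, 1 * (P.drawEvent n t).indicator (fun _ => (1 : ℝ)) ω ∂P.μ := by
      simp only [one_mul]
      rw [integral_finsetSum _ fun t _ => (integrable_const 1).indicator (hmeas t)]
      exact Finset.sum_congr rfl fun t _ => (integral_indicator_one (hmeas t)).symm
    _ = ∫ ω, P.drawMean (fun _ => 1) (P.x n ω) ∂P.μ := by
      rw [← integral_condExp (P.F.le n)]
      exact integral_congr_ae (P.condExp_sum_indicator_drawEvent n fun _ => 1)
    _ = 1 := by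
      simp only [drawMean_one (P.sum_x hS n _), integral_const, probReal_univ, smul_eq_mul, mul_one]
  filter_upwards [(mem_ae_iff_prob_eq_one (Finset.measurableSet_biUnion _ fun t _ => hmeas t)).2
    ((ENNReal.toReal_eq_one_iff _).1 hunion)] with ω hω
  simpa only [mem_iUnion, exists_prop] using hω

end Transitions

section Convergence

lemma ae_tendsto_div_add_of_increment (hS : 0 < ∑ i, P.X0 i) {Y θ : ℕ → Ω → ℝ} {B κ ℓ : ℝ}
    {v : (Fin P.N → ℕ) × Fin P.N → ℝ} (hκ : 0 < κ) (hB : 0 ≤ B)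
    (hY : StronglyAdapted P.F Y)
    (hv : ∀ n, ∀ t ∈ P.draws, ∀ ω ∈ P.drawEvent n t, Y (n + 1) ω - Y n ω = v t)
    (hdrift : ∀ n ω, P.drawMean v (P.x n ω) =
      Y n ω / (B + n) + κ * (θ n ω - Y n ω / (B + n)))
    (hθ : ∀ᵐ ω ∂P.μ, Tendsto (fun n => θ n ω) atTop (𝓝 ℓ)) :
    ∀ᵐ ω ∂P.μ, Tendsto (fun n => Y n ω / (B + n)) atTop (𝓝 ℓ) := by
  have := P.isProb
  refine ae_tendsto_div_add_of_condExp_increment (R := ∑ t ∈ P.draws, |v t|) hκ hB hY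
    (fun n => ?_) (fun n => ?_) hθ
  · filter_upwards [P.ae_exists_mem_drawEvent hS n] with ω ⟨t, ht, hω⟩
    rw [hv n t ht ω hω]
    exact Finset.single_le_sum (f := fun t => |v t|) (fun s _ => abs_nonneg _) ht
  · have hincr : Y (n + 1) - Y n =ᵐ[P.μ] fun ω =>
        ∑ t ∈ P.draws, v t * (P.drawEvent n t).indicator (fun _ => (1 : ℝ)) ω := by
      filter_upwards [P.ae_exists_mem_drawEvent hS n] with ω ⟨t, ht, hω⟩
      rw [P.sum_indicator_drawEvent_mul ht hω, Pi.sub_apply, hv n t ht ω hω]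
    simp only [← hdrift]
    exact (condExp_congr_ae hincr).trans (P.condExp_sum_indicator_drawEvent n v)

lemma stronglyAdapted_A (j : Fin P.N) : StronglyAdapted P.F fun n ω => (P.A n ω j : ℝ) :=
  fun n => (measurable_from_top.comp
    ((measurable_pi_apply j).comp (P.adaptedA n))).stronglyMeasurable

lemma stronglyAdapted_X (j : Fin P.N) : StronglyAdapted P.F fun n ω => (P.X n ω j : ℝ) :=
  fun n => (measurable_from_top.comp
    ((measurable_pi_apply j).comp (P.adaptedX n))).stronglyMeasurable

lemma ae_tendsto_a_of_tendsto_typeProb (hS : 0 < ∑ i, P.X0 i) {j : Fin P.N} {ℓ : ℝ}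
    (hq : ∀ᵐ ω ∂P.μ, Tendsto (fun n => P.typeProb (P.x n ω) j) atTop (𝓝 ℓ)) :
    ∀ᵐ ω ∂P.μ, Tendsto (fun n => P.a n ω j) atTop (𝓝 ℓ) := by
  refine P.ae_tendsto_div_add_of_increment hS (v := fun t => if j = t.2 then 1 else 0) one_pos
    (Nat.cast_nonneg _) (P.stronglyAdapted_A j) (fun n t _ ω hω => ?_) (fun n ω => ?_) hq
  · rw [hω.1 j]
    push_cast
    exact add_sub_cancel_left _ _
  · rw [drawMean_type, one_mul, add_sub_cancel]

lemma ae_tendsto_x_of_mixture (hS : 0 < ∑ i, P.X0 i) {α : ℝ} {π : Fin P.N → ℝ} (hα : 0 < α)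
    (hp : ∀ u ∈ Finset.Nat.antidiagonalTuple P.N P.m, ∀ i,
      P.p u i = α * π i + (1 - α) * (u i : ℝ) / P.m) (j : Fin P.N) :
    ∀ᵐ ω ∂P.μ, Tendsto (fun n => P.x n ω j) atTop (𝓝 (π j)) := by
  have hm : (0 : ℝ) < P.m := Nat.cast_pos.2 P.hm
  set B : ℝ := (∑ i, P.X0 i : ℕ) / (2 * P.m) with hB
  have hx (n : ℕ) (ω : Ω) : P.X n ω j / (2 * P.m) / (B + n) = P.x n ω j := by
    rw [x, cast_S, div_div, hB]
    congr 1
    field_simp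
  have hdrift (n : ℕ) (ω : Ω) : P.drawMean
      (fun t => (t.1 j + P.m * if j = t.2 then 1 else 0) / (2 * P.m)) (P.x n ω) =
        P.x n ω j + α / 2 * (π j - P.x n ω j) := by
    have hadd : P.drawMean (fun t => (t.1 j + P.m * if j = t.2 then 1 else 0) / (2 * P.m))
        (P.x n ω) = (P.drawMean (fun t => t.1 j) (P.x n ω) +
          P.m * P.drawMean (fun t => if j = t.2 then 1 else 0) (P.x n ω)) / (2 * P.m) := by
      simp only [drawMean, Finset.mul_sum, ← Finset.sum_add_distrib, Finset.sum_div]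
      exact Finset.sum_congr rfl fun t _ => by ring
    rw [hadd, drawMean_degree (P.sum_x hS n ω), drawMean_type,
      typeProb_of_mixture hp (P.sum_x hS n ω)]
    field_simp
    ring
  simp only [← hx]
  refine P.ae_tendsto_div_add_of_increment hS (half_pos hα) (by positivity)
    (fun n => ((P.stronglyAdapted_X j n).measurable.div_const _).stronglyMeasurable)
    (fun n t _ ω hω => ?_)
    (fun n ω => by rw [hx]; exact hdrift n ω) (.of_forall fun _ => tendsto_const_nhds)
  rw [hω.2 j, mul_boole]
  push_cast
  ring

end Convergence

end NPAProcess

theorem Ntype_uniform_mixture_convergence_general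
    {Ω : Type} [MeasurableSpace Ω] (P : NPAProcess Ω) (α : ℝ) (π : Fin P.N → ℝ) (hα : 0 < α)
    (hp : ∀ u ∈ Finset.Nat.antidiagonalTuple P.N P.m, ∀ i,
      P.p u i = α * π i + (1 - α) * (u i : ℝ) / P.m)
    (hS : 0 < ∑ i, P.X0 i) :
    (∀ y : Fin P.N → ℝ, ∑ i, y i = 1 → P.vec y = fun i => (α / 2) * (π i - y i)) ∧
    (∀ᵐ ω ∂P.μ, Tendsto (fun n => P.a n ω) atTop (𝓝 π)) := by
  refine ⟨fun y hy => funext fun i => ?_, ?_⟩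
  · rw [NPAProcess.vec_eq_typeProb_sub hy, NPAProcess.typeProb_of_mixture hp hy]
    ring
  · have hcoord (j : Fin P.N) : ∀ᵐ ω ∂P.μ, Tendsto (fun n => P.a n ω j) atTop (𝓝 (π j)) := by
      refine P.ae_tendsto_a_of_tendsto_typeProb hS ?_
      filter_upwards [P.ae_tendsto_x_of_mixture hS hα hp j] with ω hx
      simp only [NPAProcess.typeProb_of_mixture hp (P.sum_x hS _ ω)]
      simpa only [sub_self, mul_zero, add_zero] using hx.add ((hx.const_sub (π j)).const_mul α)
    filter_upwards [ae_all_iff.2 hcoord] with ω hω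
    exact tendsto_pi_nhds.2 hω

/-- **Mixture of the linear model and uniform choice.** Suppose `0 < α ≤ 1` and
`p_u^i = α/N + (1−α) u^i/m` for all admissible `u` and all `i`, and `X_0^i > 0` for all `i`.
Then the vector field satisfies `P(y) = (α/2)((1/N)·𝟏 − y)` on the simplex `Δ^N`, and the
process `{a_n}` converges almost surely to the vector `(1/N, …, 1/N)`. -/
theorem Ntype_uniform_mixture_convergence
    {Ω : Type} [MeasurableSpace Ω] (P : NPAProcess Ω)
    (α : ℝ) (hα0 : 0 < α) (hα1 : α ≤ 1)
    (hp : ∀ u ∈ Finset.Nat.antidiagonalTuple P.N P.m, ∀ i,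
      P.p u i = α / P.N + (1 - α) * (u i : ℝ) / P.m)
    (hX0 : ∀ i, 0 < P.X0 i) :
    (∀ y ∈ stdSimplex ℝ (Fin P.N),
      P.vec y = fun i => (α / 2) * (1 / P.N - y i)) ∧
    (∀ᵐ ω ∂P.μ,
      Tendsto (fun n => P.a n ω) atTop (nhds (fun _ => 1 / (P.N : ℝ)))) := by
  have : NeZero P.N := ⟨by linarith [P.hN]⟩
  obtain ⟨hvec, hlim⟩ := Ntype_uniform_mixture_convergence_general P α (fun _ => 1 / (P.N : ℝ))
    hα0 (fun u hu i => by rw [hp u hu i, mul_one_div])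
    (Finset.sum_pos (fun i _ => hX0 i) Finset.univ_nonempty)
  exact ⟨fun y hy => hvec y hy.2, hlim⟩
end
end

section
/- Consider the one-step Pólya urn transition adding 2m balls of the drawn color: given a random variable X with values in {X_0, X_0+1, …, S_0 + 2mn} and x = X/(S_0 + 2mn), let X̄ satisfy P(X̄ = X + 2m | X) = x and P(X̄ = X | X) = 1 − x. If X and Y are two such random variables with X ≤_icx Y (X is smaller than Y in the increasing convex order, i.e., E φ(X) ≤ E φ(Y) for all increasing continuous convex φ for which the expectations exist), then X̄ ≤_icx Ȳ. -/
open MeasureTheory ProbabilityTheory Filter Set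

noncomputable section

/-- `X` is smaller than `Y` in the increasing convex order: `E φ(X) ≤ E φ(Y)` for every
increasing continuous convex function `φ : ℝ → ℝ` for which these expectations exist. -/
def IcxLE {Ω₁ Ω₂ : Type} [MeasurableSpace Ω₁] [MeasurableSpace Ω₂]
    (μ₁ : Measure Ω₁) (μ₂ : Measure Ω₂) (X : Ω₁ → ℝ) (Y : Ω₂ → ℝ) : Prop :=
  ∀ φ : ℝ → ℝ, Monotone φ → Continuous φ → ConvexOn ℝ Set.univ φ →
    Integrable (fun ω => φ (X ω)) μ₁ → Integrable (fun ω => φ (Y ω)) μ₂ →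
    ∫ ω, φ (X ω) ∂μ₁ ≤ ∫ ω, φ (Y ω) ∂μ₂

/-- `Xbar` is the result of one Pólya urn transition from `X` adding `2m` balls of the drawn
color, at time `n`, with total `S_0 + 2mn` balls before the step: conditionally on `σ(X)`,
`Xbar = X + 2m` with probability `x = X/(S_0 + 2mn)` and `Xbar = X` with probability
`1 − x`. -/
def IsPolyaStep (m n S₀ : ℕ) {Ω : Type} [MeasurableSpace Ω] (μ : Measure Ω)
    (X Xbar : Ω → ℕ) : Prop :=
  (μ[Set.indicator {ω | Xbar ω = X ω + 2 * m} (fun _ => (1 : ℝ)) |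
      MeasurableSpace.comap X inferInstance]
    =ᵐ[μ] fun ω => (X ω : ℝ) / ((S₀ : ℝ) + 2 * m * n)) ∧
  (μ[Set.indicator {ω | Xbar ω = X ω} (fun _ => (1 : ℝ)) |
      MeasurableSpace.comap X inferInstance]
    =ᵐ[μ] fun ω => 1 - (X ω : ℝ) / ((S₀ : ℝ) + 2 * m * n))

/-!
Conditioning on `X` gives `E φ(X̄) = E (Pφ)(X)` with `Pφ(x) = (x/T) φ(x + d) + (1 − x/T) φ(x)`.
For `φ` increasing and convex, `Pφ` is increasing and convex on `[0, T]`: the weight `x/T` is linear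
and multiplies the increment `φ(x + d) − φ(x)`, which is nonnegative and increasing in `x`.
Outside `[0, T]` convexity of `Pφ` can fail, but `Pφ` is Lipschitz on `[0, T]`, so its restriction
extends to an increasing convex function on `ℝ`, against which `X ≤_icx Y` can be tested.
-/

open scoped NNReal

section ConvexFunctions

lemma monotone_add_const_sub_of_convexOn {𝕜 : Type*} [Field 𝕜] [LinearOrder 𝕜]
    [IsStrictOrderedRing 𝕜] {f : 𝕜 → 𝕜} (hf : ConvexOn 𝕜 univ f) {d : 𝕜} (hd : 0 ≤ d) :
    Monotone fun x => f (x + d) - f x := by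
  intro x y hxy
  rcases hd.eq_or_lt with rfl | hd
  · simp
  have hslope : (f (x + d) - f x) / d ≤ (f (y + d) - f y) / d := calc
    (f (x + d) - f x) / d = slope f x (x + d) := by rw [slope_def_field, add_sub_cancel_left]
    _ ≤ slope f x (y + d) :=
      hf.slope_mono (mem_univ x) ⟨mem_univ _, by simp [hd.ne']⟩
        ⟨mem_univ _, by simpa using (by linarith : x < y + d).ne'⟩ (by linarith)
    _ = slope f (y + d) x := slope_comm f _ _
    _ ≤ slope f (y + d) y :=
      hf.slope_mono (mem_univ _) ⟨mem_univ _, by simpa using (by linarith : x < y + d).ne⟩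
        ⟨mem_univ _, by simp [hd.ne']⟩ hxy
    _ = (f (y + d) - f y) / d := by rw [slope_comm, slope_def_field, add_sub_cancel_left]
  exact (div_le_div_iff_of_pos_right hd).1 hslope

lemma exists_monotoneOn_convexOn_Ici_eqOn_Icc {a b : ℝ} (hab : a ≤ b) {f : ℝ → ℝ} {K : ℝ≥0}
    (hmono : MonotoneOn f (Icc a b)) (hconv : ConvexOn ℝ (Icc a b) f)
    (hlip : LipschitzOnWith K f (Icc a b)) :
    ∃ g : ℝ → ℝ, MonotoneOn g (Ici a) ∧ ConvexOn ℝ (Ici a) g ∧ EqOn g f (Icc a b) := by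
  have hmaps : MapsTo (fun x => min x b) (Ici a) (Icc a b) := fun x hx =>
    ⟨le_min hx hab, min_le_right x b⟩
  have himage : (fun x => min x b) '' Ici a = Icc a b :=
    hmaps.image_subset.antisymm fun x hx => ⟨x, hx.1, min_eq_left hx.2⟩
  -- Tilting by the Lipschitz constant makes `f` antitone, so that composing with the concave
  -- function `min · b` keeps it convex; the tilt is undone on the whole half-line afterwards.
  have htilt_anti : AntitoneOn (fun x => f x - K * x) (Icc a b) := by
    intro x hx y hy hxy
    have := (le_abs_self _).trans (hlip.dist_le_mul y hy x hx)
    rw [Real.dist_eq, abs_of_nonneg (sub_nonneg.2 hxy)] at this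
    simp only
    linarith
  have htilt_conv : ConvexOn ℝ (Icc a b) fun x => f x - K * x :=
    hconv.sub ((concaveOn_id (convex_Icc a b)).smul K.coe_nonneg)
  have hmin : ConcaveOn ℝ (Ici a) fun x => min x b :=
    (concaveOn_id (convex_Ici a)).inf (concaveOn_const b (convex_Ici a))
  refine ⟨fun x => f (min x b) - K * min x b + K * x, ?_, ?_, ?_⟩
  · intro x hx y hy hxy
    have hf := hmono (hmaps hx) (hmaps hy) (min_le_min_right b hxy)
    have hexcess : x - min x b ≤ y - min y b := by
      rw [← max_sub_sub_left, ← max_sub_sub_left, sub_self, sub_self]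
      gcongr
    have := mul_le_mul_of_nonneg_left hexcess K.coe_nonneg
    simp only
    linarith
  · have hcomp := (himage.symm ▸ htilt_conv).comp_concaveOn hmin (himage.symm ▸ htilt_anti)
    exact hcomp.add ((convexOn_id (convex_Ici a)).smul K.coe_nonneg)
  · intro x hx
    simp [min_eq_left hx.2]

lemma exists_monotone_convexOn_univ_eqOn_Icc {a b : ℝ} (hab : a ≤ b) {f : ℝ → ℝ} {K : ℝ≥0}
    (hmono : MonotoneOn f (Icc a b)) (hconv : ConvexOn ℝ (Icc a b) f)
    (hlip : LipschitzOnWith K f (Icc a b)) :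
    ∃ g : ℝ → ℝ, Monotone g ∧ ConvexOn ℝ univ g ∧ EqOn g f (Icc a b) := by
  obtain ⟨g, hg_mono, hg_conv, hgf⟩ :=
    exists_monotoneOn_convexOn_Ici_eqOn_Icc hab hmono hconv hlip
  have himage : (fun x => max x a) '' univ = Ici a := by
    ext x
    exact ⟨fun ⟨y, _, hy⟩ => hy ▸ le_max_right y a, fun hx => ⟨x, mem_univ x, max_eq_left hx⟩⟩
  have hmax : ConvexOn ℝ univ fun x => max x a :=
    (convexOn_id convex_univ).sup (convexOn_const a convex_univ)
  refine ⟨g ∘ fun x => max x a, ?_, ?_, ?_⟩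
  · exact fun x y hxy => hg_mono (le_max_right x a) (le_max_right y a) (max_le_max_right a hxy)
  · exact (himage.symm ▸ hg_conv).comp hmax (himage.symm ▸ hg_mono)
  · intro x hx
    rw [Function.comp_apply, max_eq_left hx.1, hgf hx]

end ConvexFunctions

section Integrals

variable {Ω : Type*} {m mΩ : MeasurableSpace Ω} {μ : Measure Ω}

lemma integrable_comp_of_ae_mem_isCompact [IsFiniteMeasure μ] {E F : Type*} [TopologicalSpace E]
    [NormedAddCommGroup F] {X : Ω → E} (hX : AEStronglyMeasurable X μ) {s : Set E}
    (hs : IsCompact s) (hXs : ∀ᵐ ω ∂μ, X ω ∈ s) {f : E → F} (hf : Continuous f) :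
    Integrable (fun ω => f (X ω)) μ := by
  obtain ⟨C, hC⟩ := hs.exists_bound_of_continuousOn hf.continuousOn
  exact .of_bound (hf.comp_aestronglyMeasurable hX) C (hXs.mono fun _ hω => hC _ hω)

lemma integrable_mul_indicator_one {f : Ω → ℝ} (hf : Integrable f μ) {A : Set Ω}
    (hA : MeasurableSet A) : Integrable (fun ω => f ω * A.indicator (fun _ => (1 : ℝ)) ω) μ := by
  refine (hf.indicator hA).congr (.of_forall fun ω => ?_)
  by_cases hω : ω ∈ A <;> simp [hω]

lemma integral_mul_eq_of_condExp_ae_eq (hm : m ≤ mΩ) [SigmaFinite (μ.trim hm)] {f g p : Ω → ℝ}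
    (hf : StronglyMeasurable[m] f) (hfg : Integrable (fun ω => f ω * g ω) μ) (hg : Integrable g μ)
    (hp : μ[g | m] =ᵐ[μ] p) :
    ∫ ω, f ω * g ω ∂μ = ∫ ω, f ω * p ω ∂μ := calc
  ∫ ω, f ω * g ω ∂μ = ∫ ω, (μ[fun ω => f ω * g ω | m]) ω ∂μ := (integral_condExp hm).symm
  _ = ∫ ω, f ω * p ω ∂μ := by
    refine integral_congr_ae ?_
    filter_upwards [condExp_mul_of_stronglyMeasurable_left hf hfg hg, hp] with ω hpull hpω
    exact hpull.trans (by rw [Pi.mul_apply, hpω])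

end Integrals

lemma IcxLE.integral_comp_le_of_convexOn_Icc {Ω₁ Ω₂ : Type} [MeasurableSpace Ω₁]
    [MeasurableSpace Ω₂] {μ₁ : Measure Ω₁} {μ₂ : Measure Ω₂} [IsFiniteMeasure μ₁]
    [IsFiniteMeasure μ₂] {X : Ω₁ → ℝ} {Y : Ω₂ → ℝ} (hXY : IcxLE μ₁ μ₂ X Y)
    (hX : AEMeasurable X μ₁) (hY : AEMeasurable Y μ₂) {a b : ℝ} (hab : a ≤ b)
    (hXmem : ∀ᵐ ω ∂μ₁, X ω ∈ Icc a b) (hYmem : ∀ᵐ ω ∂μ₂, Y ω ∈ Icc a b)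
    {f : ℝ → ℝ} {K : ℝ≥0} (hmono : MonotoneOn f (Icc a b)) (hconv : ConvexOn ℝ (Icc a b) f)
    (hlip : LipschitzOnWith K f (Icc a b)) :
    ∫ ω, f (X ω) ∂μ₁ ≤ ∫ ω, f (Y ω) ∂μ₂ := by
  obtain ⟨g, hg_mono, hg_conv, hgf⟩ :=
    exists_monotone_convexOn_univ_eqOn_Icc hab hmono hconv hlip
  have hg_cont : Continuous g := hg_conv.locallyLipschitz.continuous
  calc
    ∫ ω, f (X ω) ∂μ₁ = ∫ ω, g (X ω) ∂μ₁ := integral_congr_ae (hXmem.mono fun _ hω => (hgf hω).symm)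
    _ ≤ ∫ ω, g (Y ω) ∂μ₂ := hXY g hg_mono hg_cont hg_conv
      (integrable_comp_of_ae_mem_isCompact hX.aestronglyMeasurable isCompact_Icc hXmem hg_cont)
      (integrable_comp_of_ae_mem_isCompact hY.aestronglyMeasurable isCompact_Icc hYmem hg_cont)
    _ = ∫ ω, f (Y ω) ∂μ₂ := integral_congr_ae (hYmem.mono fun _ hω => hgf hω)

/-- The transition operator of the urn chain that moves from `x` to `x + d` with probability `x / T`
and stays at `x` otherwise: `urnTransition d T φ x` is the mean of `φ` after one step from `x`.
It is a genuine average only for `x ∈ [0, T]`. -/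
def urnTransition (d T : ℝ) (φ : ℝ → ℝ) (x : ℝ) : ℝ :=
  x / T * φ (x + d) + (1 - x / T) * φ x

section UrnTransition

variable {d T : ℝ} {φ : ℝ → ℝ}

lemma monotoneOn_urnTransition (hd : 0 ≤ d) (hT : 0 < T) (hφ : Monotone φ) :
    MonotoneOn (urnTransition d T φ) (Icc 0 T) := by
  intro x _ y hy hxy
  have hweight : x / T ≤ y / T := by gcongr
  have hy_nonneg : 0 ≤ y / T := div_nonneg hy.1 hT.le
  have hy_le_one : 0 ≤ 1 - y / T := sub_nonneg.2 ((div_le_one hT).2 hy.2)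
  calc
    urnTransition d T φ x ≤ y / T * φ (x + d) + (1 - y / T) * φ x := by
      have hjump : φ x ≤ φ (x + d) := hφ (le_add_of_nonneg_right hd)
      have := mul_le_mul_of_nonneg_right hweight (sub_nonneg.2 hjump)
      rw [urnTransition]
      linarith
    _ ≤ urnTransition d T φ y :=
      add_le_add (mul_le_mul_of_nonneg_left (hφ (by gcongr)) hy_nonneg)
        (mul_le_mul_of_nonneg_left (hφ hxy) hy_le_one)

lemma convexOn_urnTransition (hd : 0 ≤ d) (hT : 0 < T) (hφ : ConvexOn ℝ univ φ) :
    ConvexOn ℝ (Icc 0 T) (urnTransition d T φ) := by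
  refine ⟨convex_Icc 0 T, fun x hx y hy a b ha hb hab => ?_⟩
  have hz : a • x + b • y ∈ Icc 0 T := convex_Icc 0 T hx hy ha hb hab
  simp only [smul_eq_mul] at hz ⊢
  set z := a * x + b * y with hz_def
  have hz_nonneg : 0 ≤ z / T := div_nonneg hz.1 hT.le
  have hz_le_one : 0 ≤ 1 - z / T := sub_nonneg.2 ((div_le_one hT).2 hz.2)
  have hstay : φ z ≤ a * φ x + b * φ y := hφ.2 (mem_univ x) (mem_univ y) ha hb hab
  have hjump : φ (z + d) ≤ a * φ (x + d) + b * φ (y + d) := by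
    have hzd : z + d = a • (x + d) + b • (y + d) := by
      simp only [smul_eq_mul]
      linear_combination hz_def - d * hab
    exact hzd ▸ hφ.2 (mem_univ (x + d)) (mem_univ (y + d)) ha hb hab
  -- The weight and the increment of `φ` both increase, hence are nonnegatively correlated.
  have hcorr : 0 ≤ (y - x) * ((φ (y + d) - φ y) - (φ (x + d) - φ x)) := by
    have hincr := monotone_add_const_sub_of_convexOn hφ hd
    rcases le_total x y with hxy | hyx
    · exact mul_nonneg (sub_nonneg.2 hxy) (sub_nonneg.2 (hincr hxy))
    · exact mul_nonneg_of_nonpos_of_nonpos (sub_nonpos.2 hyx) (sub_nonpos.2 (hincr hyx))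
  calc
    urnTransition d T φ z
      ≤ z / T * (a * φ (x + d) + b * φ (y + d)) + (1 - z / T) * (a * φ x + b * φ y) :=
        add_le_add (mul_le_mul_of_nonneg_left hjump hz_nonneg)
          (mul_le_mul_of_nonneg_left hstay hz_le_one)
    _ = a * urnTransition d T φ x + b * urnTransition d T φ y
          - a * b / T * ((y - x) * ((φ (y + d) - φ y) - (φ (x + d) - φ x))) := by
        obtain rfl : b = 1 - a := by linarith
        rw [hz_def, urnTransition, urnTransition]
        ring
    _ ≤ a * urnTransition d T φ x + b * urnTransition d T φ y :=
        sub_le_self _ (mul_nonneg (by positivity) hcorr)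

lemma locallyLipschitz_urnTransition (hφ : LocallyLipschitz φ) :
    LocallyLipschitz (urnTransition d T φ) := by
  have hcombine : ContDiff ℝ 1 fun p : ℝ × ℝ × ℝ => p.1 / T * p.2.1 + (1 - p.1 / T) * p.2.2 := by
    fun_prop
  have hshift : LocallyLipschitz fun x : ℝ => x + d :=
    ContDiff.locallyLipschitz (𝕂 := ℝ) (by fun_prop)
  exact hcombine.locallyLipschitz.comp
    (LocallyLipschitz.id.prodMk ((hφ.comp hshift).prodMk hφ))

end UrnTransition

/-- Real-valued form of `IsPolyaStep`, with an arbitrary increment `d` and total `T`: conditionally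
on `σ(X)`, `Xbar = X + d` with probability `X / T` and `Xbar = X` with probability `1 - X / T`. -/
def IsUrnStep (d T : ℝ) {Ω : Type*} [MeasurableSpace Ω] (μ : Measure Ω) (X Xbar : Ω → ℝ) : Prop :=
  (μ[{ω | Xbar ω = X ω + d}.indicator (fun _ => (1 : ℝ)) | MeasurableSpace.comap X inferInstance]
    =ᵐ[μ] fun ω => X ω / T) ∧
  (μ[{ω | Xbar ω = X ω}.indicator (fun _ => (1 : ℝ)) | MeasurableSpace.comap X inferInstance]
    =ᵐ[μ] fun ω => 1 - X ω / T)

lemma IsPolyaStep.isUrnStep {m n S₀ : ℕ} {Ω : Type} [MeasurableSpace Ω] {μ : Measure Ω}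
    {X Xbar : Ω → ℕ} (h : IsPolyaStep m n S₀ μ X Xbar) :
    IsUrnStep (2 * m) (S₀ + 2 * m * n) μ (fun ω => (X ω : ℝ)) (fun ω => (Xbar ω : ℝ)) := by
  have hcomap : MeasurableSpace.comap (fun ω => (X ω : ℝ)) inferInstance
      = MeasurableSpace.comap X inferInstance := by
    rw [← (MeasurableEmbedding.natCast (α := ℝ)).comap_eq, MeasurableSpace.comap_comp]
    rfl
  have hjump : {ω | (Xbar ω : ℝ) = X ω + 2 * m} = {ω | Xbar ω = X ω + 2 * m} := by
    ext ω
    exact_mod_cast Iff.rfl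
  have hstay : {ω | (Xbar ω : ℝ) = X ω} = {ω | Xbar ω = X ω} := by
    ext ω
    exact Nat.cast_inj
  rw [IsUrnStep, hcomap, hjump, hstay]
  exact h

namespace IsUrnStep

variable {d T : ℝ} {Ω : Type*} [MeasurableSpace Ω] {μ : Measure Ω} {X Xbar : Ω → ℝ}

lemma ae_mem_Icc (h : IsUrnStep d T μ X Xbar) (hT : 0 < T) : ∀ᵐ ω ∂μ, X ω ∈ Icc 0 T := by
  have hind (A : Set Ω) : 0 ≤ᵐ[μ] A.indicator fun _ => (1 : ℝ) :=
    .of_forall fun ω => indicator_nonneg (fun _ _ => zero_le_one) ω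
  filter_upwards [h.1, h.2, condExp_nonneg (hind _), condExp_nonneg (hind _)]
    with ω hjump hstay hjump_nonneg hstay_nonneg
  rw [hjump, Pi.zero_apply] at hjump_nonneg
  rw [hstay, Pi.zero_apply, sub_nonneg] at hstay_nonneg
  exact ⟨by simpa [hT.ne'] using mul_nonneg hjump_nonneg hT.le, (div_le_one hT).1 hstay_nonneg⟩

variable [IsFiniteMeasure μ]

lemma ae_eq_add_or_eq (h : IsUrnStep d T μ X Xbar) (hd : d ≠ 0) (hX : Measurable X)
    (hXbar : Measurable Xbar) : ∀ᵐ ω ∂μ, Xbar ω = X ω + d ∨ Xbar ω = X ω := by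
  set J := {ω | Xbar ω = X ω + d}
  set S := {ω | Xbar ω = X ω}
  have hJ : MeasurableSet J := measurableSet_eq_fun hXbar (hX.add_const d)
  have hS : MeasurableSet S := measurableSet_eq_fun hXbar hX
  have hdisj : Disjoint J S :=
    Set.disjoint_left.2 fun ω hωJ hωS => hd (left_eq_add.1 (hωS.symm.trans hωJ))
  have hcond : μ[(J ∪ S).indicator (fun _ => (1 : ℝ)) | MeasurableSpace.comap X inferInstance]
      =ᵐ[μ] fun _ => 1 := by
    rw [indicator_union_of_disjoint hdisj]
    filter_upwards [condExp_add ((integrable_const (1 : ℝ)).indicator hJ)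
      ((integrable_const (1 : ℝ)).indicator hS) (MeasurableSpace.comap X inferInstance), h.1, h.2]
      with ω hadd hjump hstay
    refine hadd.trans ?_
    rw [Pi.add_apply, hjump, hstay, add_sub_cancel]
  have hmass : μ.real (J ∪ S) = μ.real univ := calc
    μ.real (J ∪ S) = ∫ ω, (J ∪ S).indicator (fun _ => (1 : ℝ)) ω ∂μ :=
      (integral_indicator_one (hJ.union hS)).symm
    _ = ∫ _, (1 : ℝ) ∂μ := by rw [← integral_condExp hX.comap_le, integral_congr_ae hcond]
    _ = μ.real univ := by simp
  exact (ae_iff_measure_eq (hJ.union hS).nullMeasurableSet).2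
    ((measureReal_eq_measureReal_iff).1 hmass)

lemma integral_comp (h : IsUrnStep d T μ X Xbar) (hd : d ≠ 0) (hT : 0 < T) (hX : Measurable X)
    (hXbar : Measurable Xbar) {φ : ℝ → ℝ} (hφ : Continuous φ) :
    ∫ ω, φ (Xbar ω) ∂μ = ∫ ω, urnTransition d T φ (X ω) ∂μ := by
  set J := {ω | Xbar ω = X ω + d} with hJ_def
  set S := {ω | Xbar ω = X ω} with hS_def
  have hJ : MeasurableSet J := measurableSet_eq_fun hXbar (hX.add_const d)
  have hS : MeasurableSet S := measurableSet_eq_fun hXbar hX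
  have hint {ψ : ℝ → ℝ} (hψ : Continuous ψ) : Integrable (fun ω => ψ (X ω)) μ :=
    integrable_comp_of_ae_mem_isCompact hX.aestronglyMeasurable isCompact_Icc (h.ae_mem_Icc hT) hψ
  have hpull {ψ : ℝ → ℝ} (hψ : Continuous ψ) {A : Set Ω} (hA : MeasurableSet A) {p : Ω → ℝ}
      (hp : μ[A.indicator (fun _ => (1 : ℝ)) | MeasurableSpace.comap X inferInstance] =ᵐ[μ] p) :
      ∫ ω, ψ (X ω) * A.indicator (fun _ => (1 : ℝ)) ω ∂μ = ∫ ω, ψ (X ω) * p ω ∂μ :=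
    integral_mul_eq_of_condExp_ae_eq hX.comap_le
      (hψ.measurable.comp (comap_measurable X)).stronglyMeasurable
      (integrable_mul_indicator_one (hint hψ) hA) ((integrable_const 1).indicator hA) hp
  have hshift : Continuous fun x => φ (x + d) := by fun_prop
  calc
    ∫ ω, φ (Xbar ω) ∂μ
      = ∫ ω, (φ (X ω + d) * J.indicator (fun _ => (1 : ℝ)) ω
          + φ (X ω) * S.indicator (fun _ => (1 : ℝ)) ω) ∂μ := by
        refine integral_congr_ae ?_
        filter_upwards [h.ae_eq_add_or_eq hd hX hXbar] with ω hω
        rcases hω with hω | hω <;> simp [hJ_def, hS_def, hω, hd]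
    _ = ∫ ω, φ (X ω + d) * (X ω / T) ∂μ + ∫ ω, φ (X ω) * (1 - X ω / T) ∂μ := by
        rw [integral_add (integrable_mul_indicator_one (hint hshift) hJ)
          (integrable_mul_indicator_one (hint hφ) hS), hpull hshift hJ h.1, hpull hφ hS h.2]
    _ = ∫ ω, urnTransition d T φ (X ω) ∂μ := by
        rw [← integral_add (hint (ψ := fun x => φ (x + d) * (x / T)) (by fun_prop))
          (hint (ψ := fun x => φ x * (1 - x / T)) (by fun_prop))]
        simp only [urnTransition, mul_comm]

end IsUrnStep

theorem polya_step_preserves_icx_general {d T : ℝ} (hd : 0 < d) (hT : 0 < T)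
    {Ω₁ Ω₂ : Type} [MeasurableSpace Ω₁] [MeasurableSpace Ω₂]
    {μ₁ : Measure Ω₁} {μ₂ : Measure Ω₂} [IsFiniteMeasure μ₁] [IsFiniteMeasure μ₂]
    {X Xbar : Ω₁ → ℝ} {Y Ybar : Ω₂ → ℝ} (hX : Measurable X) (hY : Measurable Y)
    (hXbar : Measurable Xbar) (hYbar : Measurable Ybar)
    (hXstep : IsUrnStep d T μ₁ X Xbar) (hYstep : IsUrnStep d T μ₂ Y Ybar)
    (hicx : IcxLE μ₁ μ₂ X Y) : IcxLE μ₁ μ₂ Xbar Ybar := by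
  intro φ hmono hcont hconv _ _
  obtain ⟨K, hlip⟩ := (locallyLipschitz_urnTransition (d := d) (T := T)
    hconv.locallyLipschitz).locallyLipschitzOn.exists_lipschitzOnWith_of_compact
      (isCompact_Icc (a := 0) (b := T))
  rw [hXstep.integral_comp hd.ne' hT hX hXbar hcont, hYstep.integral_comp hd.ne' hT hY hYbar hcont]
  exact hicx.integral_comp_le_of_convexOn_Icc hX.aemeasurable hY.aemeasurable hT.le
    (hXstep.ae_mem_Icc hT) (hYstep.ae_mem_Icc hT) (monotoneOn_urnTransition hd.le hT hmono)
    (convexOn_urnTransition hd.le hT hconv) hlip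

/-- **Pólya urn transitions preserve the increasing convex order.** Let `X` and `Y` be
random variables with values in `{X_0, …, S_0 + 2mn}` and let `X̄`, `Ȳ` be obtained from
them by one Pólya urn transition adding `2m` balls of the drawn color.  If `X ≤_icx Y` then
`X̄ ≤_icx Ȳ`. -/
theorem polya_step_preserves_icx
    (m n X₀ S₀ : ℕ) (hm : 1 ≤ m) (hX₀ : 0 < X₀) (hS₀ : X₀ ≤ S₀)
    {Ω₁ Ω₂ : Type} [MeasurableSpace Ω₁] [MeasurableSpace Ω₂]
    (μ₁ : Measure Ω₁) (μ₂ : Measure Ω₂)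
    [IsProbabilityMeasure μ₁] [IsProbabilityMeasure μ₂]
    (X Xbar : Ω₁ → ℕ) (Y Ybar : Ω₂ → ℕ)
    (hXmeas : Measurable X) (hYmeas : Measurable Y)
    (hXbarmeas : Measurable Xbar) (hYbarmeas : Measurable Ybar)
    (hXrange : ∀ ω, X ω ∈ Set.Icc X₀ (S₀ + 2 * m * n))
    (hYrange : ∀ ω, Y ω ∈ Set.Icc X₀ (S₀ + 2 * m * n))
    (hXstep : IsPolyaStep m n S₀ μ₁ X Xbar)
    (hYstep : IsPolyaStep m n S₀ μ₂ Y Ybar)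
    (hicx : IcxLE μ₁ μ₂ (fun ω => (X ω : ℝ)) (fun ω => (Y ω : ℝ))) :
    IcxLE μ₁ μ₂ (fun ω => (Xbar ω : ℝ)) (fun ω => (Ybar ω : ℝ)) := by
  have hT : 0 < S₀ + 2 * m * n := by omega
  exact polya_step_preserves_icx_general (by positivity) (by exact_mod_cast hT)
    (by fun_prop) (by fun_prop) (by fun_prop) (by fun_prop) hXstep.isUrnStep hYstep.isUrnStep hicx
end
end
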